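/- For the central Cantor set C_λ (λ > 2), the group of homeomorphisms of C_λ arising as restrictions of orientation-preserving C¹ diffeomorphisms of ℝ preserving C_λ is isomorphic to Thompson's group F. -/

import Mathlib

open Set Filter Topology Asymptotics

/-- A Cantor subset of the reals: nonempty, compact, perfect, totally disconnected. -/
def IsCantorSet (C : Set ℝ) : Prop :=
  C.Nonempty ∧ IsCompact C ∧ Perfect C ∧ IsTotallyDisconnected C

/-- `C` is `σ`-sparse: any two points of `C` bound a complementary open interval of
relative length at least `σ`. -/
def SparseSet (σ : ℝ) (C : Set ℝ) : Prop :=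
  ∀ a ∈ C, ∀ b ∈ C, a < b →
    ∃ α β : ℝ, a ≤ α ∧ α < β ∧ β ≤ b ∧ Set.Ioo α β ∩ C = ∅ ∧ σ * (b - a) ≤ β - α

/-- `φ` is a `C¹` diffeomorphism of `ℝ` with inverse `ψ`. -/
def IsC1DiffeoPair (φ ψ : ℝ → ℝ) : Prop :=
  ContDiff ℝ 1 φ ∧ ContDiff ℝ 1 ψ ∧ Function.LeftInverse ψ φ ∧ Function.RightInverse ψ φ

/-- `C` is the central Cantor set of parameter `l`: the attractor of the IFS
`φ₀(x) = x/l`, `φ₁(x) = x/l + (l-1)/l`, i.e. the unique nonempty compact set with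
`C = φ₀(C) ∪ φ₁(C)`. -/
def IsCentralCantor (l : ℝ) (C : Set ℝ) : Prop :=
  IsCompact C ∧ C.Nonempty ∧
    C = (fun x => x / l) '' C ∪ (fun x => x / l + (l - 1) / l) '' C

/-- An element of the Higman–Thompson group `F_p`: a piecewise linear
orientation-preserving homeomorphism of `[0,1]` with finitely many breakpoints, all
in `ℤ[1/p]`, and slopes integer powers of `p`. -/
def IsHigmanThompson (p : ℕ) (f : ℝ → ℝ) : Prop :=
  f 0 = 0 ∧ f 1 = 1 ∧ StrictMonoOn f (Set.Icc 0 1) ∧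
  ∃ (m : ℕ) (x : ℕ → ℝ), 0 < m ∧ x 0 = 0 ∧ x m = 1 ∧
    (∀ i < m, x i < x (i + 1)) ∧
    (∀ i ≤ m, ∃ (a : ℤ) (e : ℕ), x i = (a : ℝ) / (p : ℝ) ^ e) ∧
    (∀ i < m, ∃ k : ℤ, ∀ t ∈ Set.Icc (x i) (x (i + 1)),
      f t = f (x i) + (p : ℝ) ^ k * (t - x i))

/-!
A `C¹` diffeomorphism `g` preserving `C` maps gaps of `C` onto gaps, and the length of every gap is
`(l - 2) / l` times a power of `l`; so the slope of `g` across a gap is a power of `l`. As `log g'`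
is uniformly continuous on `[0, 1]`, on a sufficiently small cylinder these powers differ by a
factor less than `l` and hence are all equal. On such a cylinder `g` minus an affine map is a
Lipschitz function without jumps across gaps, so it is constant on `C`, because the total length
`(2 / l) ^ n` of the cylinders of level `n` tends to zero. Thus `g` carries small cylinders
affinely onto cylinders, following a finite table of binary words, and the Cantor function, which
identifies the two ends of each gap, semiconjugates `g` to the element of `F` with the same table.

Conversely, the table of an element of `F` prescribes affine maps between cylinders; these are
joined across the gaps by integrating a continuous positive density with prescribed end values and
prescribed integrals. The lift to `C` is unique because the Cantor function is strictly increasing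
up to identification of the ends of gaps.
-/

/-! ### Cylinders and gaps -/

namespace CentralCantor

/-- The `k`-th Cantor integer to base `l`: the binary digits of `k` are read in base `l` and the
result is multiplied by `l - 1`. These are the left endpoints of the unit-scale copies of `C_l`
that make up the dilates `l ^ n • C_l`. -/
noncomputable def cantorInt (l : ℝ) (k : ℕ) : ℝ :=
  (l - 1) * Nat.ofDigits l (Nat.digits 2 k)

/-- The affine map of the hull `[0, 1]` of `C_l` onto the `k`-th cylinder of level `n`, counted
from the left starting at `k = 0`; cylinders of the interval `[0, 1]` itself are the case `l = 2`,
see `cyl_two`. Only `k < 2 ^ n` gives a cylinder inside `[0, 1]`. -/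
noncomputable def cyl (l : ℝ) (n k : ℕ) (y : ℝ) : ℝ :=
  (cantorInt l k + y) / l ^ n

section Cylinders

variable {l : ℝ}

lemma cantorInt_zero (l : ℝ) : cantorInt l 0 = 0 := by
  simp [cantorInt, Nat.ofDigits]

lemma cantorInt_two_mul_add (l : ℝ) (k : ℕ) {b : ℕ} (hb : b < 2) :
    cantorInt l (2 * k + b) = l * cantorInt l k + (l - 1) * b := by
  by_cases h : b ≠ 0 ∨ k ≠ 0
  · rw [cantorInt, add_comm, Nat.digits_add 2 one_lt_two b k hb h, Nat.ofDigits, cantorInt]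
    ring
  · obtain ⟨rfl, rfl⟩ : b = 0 ∧ k = 0 := by simpa using h
    simp [cantorInt_zero]

lemma cantorInt_two_mul (l : ℝ) (k : ℕ) : cantorInt l (2 * k) = l * cantorInt l k := by
  simpa using cantorInt_two_mul_add l k two_pos

lemma cantorInt_two_mul_add_one (l : ℝ) (k : ℕ) :
    cantorInt l (2 * k + 1) = l * cantorInt l k + (l - 1) := by
  simpa using cantorInt_two_mul_add l k one_lt_two

lemma cantorInt_two (k : ℕ) : cantorInt 2 k = k := by
  have h : (Nat.ofDigits (2 : ℝ) (Nat.digits 2 k)) = k := by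
    exact_mod_cast congrArg (Nat.cast (R := ℝ)) (Nat.ofDigits_digits 2 k)
  rw [cantorInt, h]
  ring

lemma cantorInt_add_one_lt_succ (hl : 2 < l) (k : ℕ) :
    cantorInt l k + 1 < cantorInt l (k + 1) := by
  induction k using Nat.strong_induction_on with
  | _ k ih =>
    obtain ⟨m, rfl | rfl⟩ := Nat.even_or_odd' k
    · rw [cantorInt_two_mul, cantorInt_two_mul_add_one]
      linarith
    · rw [show 2 * m + 1 + 1 = 2 * (m + 1) by ring, cantorInt_two_mul, cantorInt_two_mul_add_one]
      have := ih m (by omega)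
      nlinarith

lemma cantorInt_add_one_lt (hl : 2 < l) {j k : ℕ} (hjk : j < k) :
    cantorInt l j + 1 < cantorInt l k := by
  have hmono : StrictMono (cantorInt l) := strictMono_nat_of_lt_succ fun k => by
    linarith [cantorInt_add_one_lt_succ hl k]
  exact (cantorInt_add_one_lt_succ hl j).trans_le (hmono.monotone hjk)

lemma cantorInt_mul_two_pow_add (l : ℝ) (k : ℕ) {m j : ℕ} (hj : j < 2 ^ m) :
    cantorInt l (k * 2 ^ m + j) = l ^ m * cantorInt l k + cantorInt l j := by
  induction m generalizing j with
  | zero =>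
    obtain rfl : j = 0 := by simpa using hj
    simp [cantorInt_zero]
  | succ m ih =>
    have hb : j % 2 < 2 := Nat.mod_lt j two_pos
    have hi : j / 2 < 2 ^ m := by rw [pow_succ] at hj; omega
    rw [← Nat.div_add_mod j 2, show k * 2 ^ (m + 1) + (2 * (j / 2) + j % 2) =
      2 * (k * 2 ^ m + j / 2) + j % 2 by ring, cantorInt_two_mul_add l _ hb,
      cantorInt_two_mul_add l _ hb, ih hi]
    ring

lemma cantorInt_two_pow_sub_one (l : ℝ) (n : ℕ) : cantorInt l (2 ^ n - 1) + 1 = l ^ n := by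
  induction n with
  | zero => simp [cantorInt_zero]
  | succ n ih =>
    have h : 2 ^ (n + 1) - 1 = 2 * (2 ^ n - 1) + 1 := by
      have := Nat.one_le_two_pow (n := n)
      rw [pow_succ]
      omega
    rw [h, cantorInt_two_mul_add_one, pow_succ, ← ih]
    ring

lemma cyl_zero_zero (l y : ℝ) : cyl l 0 0 y = y := by
  simp [cyl, cantorInt_zero]

lemma cyl_zero_left (l : ℝ) (n : ℕ) : cyl l n 0 0 = 0 := by
  simp [cyl, cantorInt_zero]

lemma cyl_two (n k : ℕ) (y : ℝ) : cyl 2 n k y = (k + y) / 2 ^ n := by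
  rw [cyl, cantorInt_two]

lemma cyl_one_zero (l y : ℝ) : cyl l 1 0 y = y / l := by
  simp [cyl, cantorInt_zero]

lemma cyl_one_one (l y : ℝ) : cyl l 1 1 y = y / l + (l - 1) / l := by
  have h : cantorInt l 1 = l - 1 := by
    simpa [cantorInt_zero] using cantorInt_two_mul_add_one l 0
  rw [cyl, h, pow_one, ← add_div, add_comm]

lemma cyl_last (hl : l ≠ 0) (n : ℕ) : cyl l n (2 ^ n - 1) 1 = 1 := by
  rw [cyl, cantorInt_two_pow_sub_one, div_self (pow_ne_zero n hl)]

lemma cyl_sub_cyl (l : ℝ) (n k : ℕ) (x y : ℝ) : cyl l n k x - cyl l n k y = (x - y) / l ^ n := by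
  rw [cyl, cyl, ← sub_div, add_sub_add_left_eq_sub]

lemma cyl_strictMono (hl : 0 < l) (n k : ℕ) : StrictMono (cyl l n k) := fun x y hxy => by
  simp only [cyl]
  gcongr

lemma cyl_cyl (hl : l ≠ 0) (n k : ℕ) {m j : ℕ} (hj : j < 2 ^ m) (y : ℝ) :
    cyl l n k (cyl l m j y) = cyl l (n + m) (k * 2 ^ m + j) y := by
  simp only [cyl, cantorInt_mul_two_pow_add l k hj, pow_add]
  field_simp
  ring

lemma mul_two_pow_add_lt {n k m j : ℕ} (hk : k < 2 ^ n) (hj : j < 2 ^ m) :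
    k * 2 ^ m + j < 2 ^ (n + m) := by
  calc k * 2 ^ m + j < (k + 1) * 2 ^ m := by rw [add_one_mul]; omega
    _ ≤ 2 ^ (n + m) := by rw [pow_add]; exact Nat.mul_le_mul_right _ hk

lemma cyl_succ_two_mul (hl : l ≠ 0) (n k : ℕ) (y : ℝ) :
    cyl l (n + 1) (2 * k) y = cyl l n k (cyl l 1 0 y) := by
  rw [cyl_cyl hl n k (by norm_num), pow_one, add_zero, mul_comm]

lemma cyl_succ_two_mul_add_one (hl : l ≠ 0) (n k : ℕ) (y : ℝ) :
    cyl l (n + 1) (2 * k + 1) y = cyl l n k (cyl l 1 1 y) := by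
  rw [cyl_cyl hl n k (by norm_num), pow_one, mul_comm]

lemma cyl_lt_cyl (hl : 2 < l) (n : ℕ) {j k : ℕ} (hjk : j < k) {x y : ℝ} (hx : x ≤ 1)
    (hy : 0 ≤ y) : cyl l n j x < cyl l n k y := by
  have h := cantorInt_add_one_lt hl hjk
  have hpow : 0 < l ^ n := by positivity
  exact div_lt_div_of_pos_right (by linarith) hpow

lemma lt_of_cyl_lt_cyl (hl : 2 < l) {n j k : ℕ} {x y : ℝ} (hx : x ∈ Icc (0 : ℝ) 1)
    (hy : y ∈ Icc (0 : ℝ) 1) (hdist : 1 / l ^ n < cyl l n k y - cyl l n j x) : j < k := by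
  have hpow : 0 < l ^ n := by positivity
  by_contra! hkj
  obtain rfl | hkj := hkj.eq_or_lt
  · rw [cyl_sub_cyl, div_lt_div_iff_of_pos_right hpow] at hdist
    linarith [hx.1, hy.2]
  · linarith [cyl_lt_cyl hl n hkj hy.2 hx.1, one_div_pos.2 hpow]

lemma exists_cyl_middle_eq (hl : l ≠ 0) {n k : ℕ} (hk : k + 1 < 2 ^ n) :
    ∃ m, ∃ j < 2 ^ m, cyl l m j (cyl l 1 0 1) = cyl l n k 1 ∧
      cyl l m j (cyl l 1 1 0) = cyl l n (k + 1) 0 := by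
  induction n generalizing k with
  | zero => simp at hk
  | succ n ih =>
    rw [pow_succ] at hk
    obtain ⟨i, rfl | rfl⟩ := Nat.even_or_odd' k
    · exact ⟨n, i, by omega, (cyl_succ_two_mul hl n i 1).symm,
        (cyl_succ_two_mul_add_one hl n i 0).symm⟩
    · obtain ⟨m, j, hj, hleft, hright⟩ := ih (k := i) (by omega)
      refine ⟨m, j, hj, ?_, ?_⟩
      · rw [cyl_succ_two_mul_add_one hl, hleft, show cyl l 1 1 1 = 1 from cyl_last hl 1]
      · rw [hright, show 2 * i + 1 + 1 = 2 * (i + 1) by ring, cyl_succ_two_mul hl, cyl_zero_left]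

lemma tendsto_one_div_pow_atTop (hl : 1 < l) : Tendsto (fun n : ℕ => 1 / l ^ n) atTop (𝓝 0) := by
  simpa only [one_div, ← inv_pow] using
    tendsto_pow_atTop_nhds_zero_of_lt_one (by positivity) (inv_lt_one_of_one_lt₀ hl)

end Cylinders

/-- `x` and `y` are the endpoints of a bounded component of the complement of `C`. -/
structure IsGap (C : Set ℝ) (x y : ℝ) : Prop where
  left_mem : x ∈ C
  right_mem : y ∈ C
  lt : x < y
  notMem_Ioo : ∀ z ∈ C, z ∉ Ioo x y

lemma isGap_image_iff {C : Set ℝ} {g : ℝ → ℝ} (hg : StrictMonoOn g C) (hgC : g '' C = C) {x y : ℝ}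
    (hx : x ∈ C) (hy : y ∈ C) : IsGap C (g x) (g y) ↔ IsGap C x y := by
  have hmaps : ∀ z ∈ C, g z ∈ C := fun z hz => hgC ▸ mem_image_of_mem g hz
  constructor
  · intro h
    refine ⟨hx, hy, (hg.lt_iff_lt hx hy).1 h.lt, fun z hz hxzy => ?_⟩
    exact h.notMem_Ioo (g z) (hmaps z hz) ⟨hg hx hz hxzy.1, hg hz hy hxzy.2⟩
  · intro h
    refine ⟨hmaps x hx, hmaps y hy, hg hx hy h.lt, ?_⟩
    rw [← hgC]
    rintro _ ⟨z, hz, rfl⟩ hxzy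
    exact h.notMem_Ioo z hz ⟨(hg.lt_iff_lt hx hz).1 hxzy.1, (hg.lt_iff_lt hz hy).1 hxzy.2⟩

end CentralCantor

open CentralCantor

namespace IsCentralCantor

variable {l : ℝ} {C : Set ℝ}

lemma mem_iff (hC : IsCentralCantor l C) {x : ℝ} :
    x ∈ C ↔ (∃ y ∈ C, cyl l 1 0 y = x) ∨ ∃ y ∈ C, cyl l 1 1 y = x := by
  conv_lhs => rw [hC.2.2]
  simp only [mem_union, mem_image, cyl_one_zero, cyl_one_one]

lemma isLeast_zero (hC : IsCentralCantor l C) (hl : 1 < l) : IsLeast C 0 := by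
  have hl0 : 0 < l := one_pos.trans hl
  obtain ⟨m, hm, hmin⟩ := hC.1.exists_isLeast hC.2.1
  have hle : m ≤ m / l := hmin (hC.mem_iff.2 (.inl ⟨m, hm, cyl_one_zero l m⟩))
  have hge : m / l ≤ m := by
    obtain ⟨y, hy, rfl⟩ | ⟨y, hy, rfl⟩ := hC.mem_iff.1 hm
    · rw [cyl_one_zero] at hmin ⊢
      exact div_le_div_of_nonneg_right (hmin hy) hl0.le
    · rw [cyl_one_one] at hmin ⊢
      have : 0 ≤ (l - 1) / l := div_nonneg (by linarith) hl0.le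
      linarith [div_le_div_of_nonneg_right (hmin hy) hl0.le]
  obtain rfl : m = 0 := by
    have := (eq_div_iff hl0.ne').1 (hle.antisymm hge)
    nlinarith
  exact ⟨hm, hmin⟩

lemma isGreatest_one (hC : IsCentralCantor l C) (hl : 1 < l) : IsGreatest C 1 := by
  have hl0 : 0 < l := one_pos.trans hl
  obtain ⟨m, hm, hmax⟩ := hC.1.exists_isGreatest hC.2.1
  have hge : m / l + (l - 1) / l ≤ m := hmax (hC.mem_iff.2 (.inr ⟨m, hm, cyl_one_one l m⟩))
  have hle : m ≤ m / l + (l - 1) / l := by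
    obtain ⟨y, hy, rfl⟩ | ⟨y, hy, rfl⟩ := hC.mem_iff.1 hm
    · rw [cyl_one_zero] at hmax ⊢
      have : 0 ≤ (l - 1) / l := div_nonneg (by linarith) hl0.le
      linarith [div_le_div_of_nonneg_right (hmax hy) hl0.le]
    · rw [cyl_one_one] at hmax ⊢
      linarith [div_le_div_of_nonneg_right (hmax hy) hl0.le]
  obtain rfl : m = 1 := by
    have := hle.antisymm hge
    rw [← add_div, eq_div_iff hl0.ne'] at this
    nlinarith
  exact ⟨hm, hmax⟩

lemma zero_mem (hC : IsCentralCantor l C) (hl : 1 < l) : (0 : ℝ) ∈ C :=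
  (hC.isLeast_zero hl).1

lemma one_mem (hC : IsCentralCantor l C) (hl : 1 < l) : (1 : ℝ) ∈ C :=
  (hC.isGreatest_one hl).1

lemma subset_Icc (hC : IsCentralCantor l C) (hl : 1 < l) : C ⊆ Icc 0 1 := fun _ hx =>
  ⟨(hC.isLeast_zero hl).2 hx, (hC.isGreatest_one hl).2 hx⟩

lemma cyl_mem (hC : IsCentralCantor l C) (hl : l ≠ 0) {n k : ℕ} (hk : k < 2 ^ n) {y : ℝ}
    (hy : y ∈ C) : cyl l n k y ∈ C := by
  induction n generalizing k y with
  | zero =>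
    obtain rfl : k = 0 := by simpa using hk
    rwa [cyl_zero_zero]
  | succ n ih =>
    rw [pow_succ] at hk
    obtain ⟨j, rfl | rfl⟩ := Nat.even_or_odd' k
    · rw [cyl_succ_two_mul hl]
      exact ih (by omega) (hC.mem_iff.2 (.inl ⟨y, hy, rfl⟩))
    · rw [cyl_succ_two_mul_add_one hl]
      exact ih (by omega) (hC.mem_iff.2 (.inr ⟨y, hy, rfl⟩))

lemma exists_cyl (hC : IsCentralCantor l C) (hl : l ≠ 0) (n : ℕ) {x : ℝ} (hx : x ∈ C) :
    ∃ k < 2 ^ n, ∃ y ∈ C, cyl l n k y = x := by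
  induction n with
  | zero => exact ⟨0, by simp, x, hx, cyl_zero_zero l x⟩
  | succ n ih =>
    obtain ⟨k, hk, y, hy, rfl⟩ := ih
    rw [pow_succ]
    obtain ⟨z, hz, rfl⟩ | ⟨z, hz, rfl⟩ := hC.mem_iff.1 hy
    · exact ⟨2 * k, by omega, z, hz, cyl_succ_two_mul hl n k z⟩
    · exact ⟨2 * k + 1, by omega, z, hz, cyl_succ_two_mul_add_one hl n k z⟩

lemma exists_cyl_eq_of_mem_Icc (hC : IsCentralCantor l C) (hl : 2 < l) {n k : ℕ} {x : ℝ}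
    (hx : x ∈ C) (hxk : x ∈ Icc (cyl l n k 0) (cyl l n k 1)) : ∃ y ∈ C, cyl l n k y = x := by
  obtain ⟨j, -, y, hy, rfl⟩ := hC.exists_cyl (by positivity) n hx
  have hy01 := hC.subset_Icc (by linarith) hy
  obtain h | rfl | h := lt_trichotomy j k
  · exact absurd hxk.1 (cyl_lt_cyl hl n h hy01.2 le_rfl).not_ge
  · exact ⟨y, hy, rfl⟩
  · exact absurd hxk.2 (cyl_lt_cyl hl n h le_rfl hy01.1).not_ge

lemma isGap_cyl (hC : IsCentralCantor l C) (hl : 2 < l) {n k : ℕ} (hk : k < 2 ^ n) {x y : ℝ}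
    (hxy : IsGap C x y) : IsGap C (cyl l n k x) (cyl l n k y) := by
  have hl0 : 0 < l := by linarith
  have hmono := cyl_strictMono hl0 n k
  have hsub := hC.subset_Icc (by linarith : 1 < l)
  refine ⟨hC.cyl_mem hl0.ne' hk hxy.left_mem, hC.cyl_mem hl0.ne' hk hxy.right_mem, hmono hxy.lt, ?_⟩
  rintro z hz ⟨hxz, hzy⟩
  obtain ⟨w, hw, rfl⟩ := hC.exists_cyl_eq_of_mem_Icc hl hz
    ⟨(hmono.monotone (hsub hxy.left_mem).1).trans hxz.le,
      hzy.le.trans (hmono.monotone (hsub hxy.right_mem).2)⟩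
  exact hxy.notMem_Ioo w hw ⟨hmono.lt_iff_lt.1 hxz, hmono.lt_iff_lt.1 hzy⟩

lemma isGap_cyl_succ (hC : IsCentralCantor l C) (hl : 2 < l) {n k : ℕ} (hk : k + 1 < 2 ^ n) :
    IsGap C (cyl l n k 1) (cyl l n (k + 1) 0) := by
  have hl0 : l ≠ 0 := by positivity
  have hl1 : 1 < l := by linarith
  refine ⟨hC.cyl_mem hl0 (by omega) (hC.one_mem hl1), hC.cyl_mem hl0 hk (hC.zero_mem hl1),
    cyl_lt_cyl hl n k.lt_succ_self le_rfl le_rfl, ?_⟩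
  rintro z hz ⟨hlt, hgt⟩
  obtain ⟨j, -, y, hy, rfl⟩ := hC.exists_cyl hl0 n hz
  have hy01 := hC.subset_Icc hl1 hy
  have hkj : k < j := by
    by_contra! h
    obtain rfl | h := h.eq_or_lt
    · exact ((cyl_strictMono (by positivity) n j).monotone hy01.2).not_gt hlt
    · exact (cyl_lt_cyl hl n h hy01.2 zero_le_one).not_gt hlt
  obtain rfl | h := (Nat.succ_le_of_lt hkj).eq_or_lt
  · exact ((cyl_strictMono (by positivity) n _).monotone hy01.1).not_gt hgt
  · exact (cyl_lt_cyl hl n h zero_le_one hy01.1).not_gt hgt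

/-- The hypothesis says that the dyadic intervals `[j / 2 ^ m, (j + 1) / 2 ^ m]` and
`[j' / 2 ^ m', (j' + 1) / 2 ^ m']` are adjacent. -/
lemma isGap_cyl_of_adjacent (hC : IsCentralCantor l C) (hl : 2 < l) {m j m' j' : ℕ}
    (hj' : j' < 2 ^ m') (hadj : (j + 1) * 2 ^ m' = j' * 2 ^ m) :
    IsGap C (cyl l m j 1) (cyl l m' j' 0) := by
  have hl0 : l ≠ 0 := by positivity
  have hpos : 0 < 2 ^ m' := by positivity
  have hidx : j * 2 ^ m' + (2 ^ m' - 1) + 1 = j' * 2 ^ m := by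
    rw [← hadj, add_one_mul]
    omega
  have hlt : j' * 2 ^ m < 2 ^ (m' + m) := by
    simpa using mul_two_pow_add_lt hj' (j := 0) (m := m) (by positivity)
  have hleft : cyl l m j 1 = cyl l (m' + m) (j * 2 ^ m' + (2 ^ m' - 1)) 1 := by
    rw [add_comm m', ← cyl_cyl hl0 m j (by omega), cyl_last hl0]
  have hright : cyl l m' j' 0 = cyl l (m' + m) (j' * 2 ^ m) 0 := by
    rw [← add_zero (j' * 2 ^ m), ← cyl_cyl hl0 m' j' (by positivity), cyl_zero_left]
  rw [hleft, hright, ← hidx]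
  exact hC.isGap_cyl_succ hl (by rw [hidx]; exact hlt)

lemma exists_cyl_succ_of_isGap (hC : IsCentralCantor l C) (hl : 2 < l) {x y : ℝ}
    (hxy : IsGap C x y) : ∃ n k, k + 1 < 2 ^ n ∧ cyl l n k 1 = x ∧ cyl l n (k + 1) 0 = y := by
  have hl0 : l ≠ 0 := by positivity
  have hl1 : 1 < l := by linarith
  have hsub := hC.subset_Icc hl1
  have hmono (n k : ℕ) := (cyl_strictMono (by positivity : 0 < l) n k).monotone
  obtain ⟨n, hn⟩ : ∃ n : ℕ, 1 / l ^ n < y - x :=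
    ((tendsto_one_div_pow_atTop hl1).eventually_lt_const (sub_pos.2 hxy.lt)).exists
  obtain ⟨j, hj, a, ha, rfl⟩ := hC.exists_cyl hl0 n hxy.left_mem
  obtain ⟨k, hk, b, hb, rfl⟩ := hC.exists_cyl hl0 n hxy.right_mem
  have hjk : j < k := lt_of_cyl_lt_cyl hl (hsub ha) (hsub hb) hn
  have hleft : cyl l n j 1 = cyl l n j a := by
    refine ((hmono n j (hsub ha).2).eq_or_lt.resolve_right fun h => ?_).symm
    exact hxy.notMem_Ioo _ (hC.cyl_mem hl0 hj (hC.one_mem hl1))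
      ⟨h, cyl_lt_cyl hl n hjk le_rfl (hsub hb).1⟩
  have hright : cyl l n k 0 = cyl l n k b := by
    refine (hmono n k (hsub hb).1).eq_or_lt.resolve_right fun h => ?_
    exact hxy.notMem_Ioo _ (hC.cyl_mem hl0 hk (hC.zero_mem hl1))
      ⟨cyl_lt_cyl hl n hjk (hsub ha).2 le_rfl, h⟩
  obtain rfl | hlt := (Nat.succ_le_of_lt hjk).eq_or_lt
  · exact ⟨n, j, hk, hleft, hright⟩
  · exact absurd ⟨cyl_lt_cyl hl n j.lt_succ_self (hsub ha).2 le_rfl,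
      cyl_lt_cyl hl n hlt zero_le_one (hsub hb).1⟩
      (hxy.notMem_Ioo _ (hC.cyl_mem hl0 (hlt.trans hk) (hC.zero_mem hl1)))

lemma isGap_middle (hC : IsCentralCantor l C) (hl : 2 < l) :
    IsGap C (cyl l 1 0 1) (cyl l 1 1 0) :=
  hC.isGap_cyl_succ hl (by norm_num)

lemma exists_cyl_middle_of_isGap (hC : IsCentralCantor l C) (hl : 2 < l) {x y : ℝ}
    (hxy : IsGap C x y) :
    ∃ n, ∃ k < 2 ^ n, cyl l n k (cyl l 1 0 1) = x ∧ cyl l n k (cyl l 1 1 0) = y := by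
  obtain ⟨n, k, hk, rfl, rfl⟩ := hC.exists_cyl_succ_of_isGap hl hxy
  exact exists_cyl_middle_eq (by positivity) hk

end IsCentralCantor

/-! ### The Cantor function -/

namespace CentralCantor

/-- The map of `C_l` onto itself which expands both first-level cylinders of `C_l` to `C_l`. -/
noncomputable def expand (l x : ℝ) : ℝ :=
  if x ≤ 1 / 2 then l * x else l * x - (l - 1)

/-- The Cantor function of `C_l`, that is the semiconjugacy of `expand l` with the doubling map:
the itinerary of `x` under `expand l` is read as a binary expansion. Only its values on `C_l` are
meaningful. -/
noncomputable def cantorFn (l x : ℝ) : ℝ :=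
  Real.ofDigits (b := 2) fun n => if (expand l)^[n] x ≤ 1 / 2 then 0 else 1

section CantorFunction

variable {l : ℝ}

lemma cantorFn_mem_Icc (l x : ℝ) : cantorFn l x ∈ Icc (0 : ℝ) 1 :=
  ⟨Real.ofDigits_nonneg _, Real.ofDigits_le_one _⟩

lemma cantorFn_eq (l x : ℝ) :
    cantorFn l x = ((if x ≤ 1 / 2 then 0 else 1) + cantorFn l (expand l x)) / 2 := by
  have h := Real.ofDigits_eq_sum_add_ofDigits (b := 2)
    (fun n => if (expand l)^[n] x ≤ 1 / 2 then 0 else 1) 1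
  simp only [Function.iterate_succ_apply, Finset.sum_range_one, Real.ofDigitsTerm,
    Function.iterate_zero_apply] at h
  rw [cantorFn, h, cantorFn]
  by_cases hx : x ≤ 1 / 2 <;> simp only [hx, if_true, if_false] <;> norm_num <;> ring

lemma cyl_one_mem_Icc (hl : 1 ≤ l) {b : ℕ} (hb : b < 2) {y : ℝ} (hy : y ∈ Icc (0 : ℝ) 1) :
    cyl l 1 b y ∈ Icc (0 : ℝ) 1 := by
  have hl0 : 0 < l := by linarith
  interval_cases b
  · rw [cyl_one_zero]
    exact ⟨div_nonneg hy.1 hl0.le, div_le_one_of_le₀ (hy.2.trans hl) hl0.le⟩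
  · rw [cyl_one_one, ← add_div]
    exact ⟨div_nonneg (by linarith [hy.1]) hl0.le, div_le_one_of_le₀ (by linarith [hy.2]) hl0.le⟩

lemma cantorFn_cyl_one (hl : 2 < l) {b : ℕ} (hb : b < 2) {y : ℝ} (hy : y ∈ Icc (0 : ℝ) 1) :
    cantorFn l (cyl l 1 b y) = cyl 2 1 b (cantorFn l y) := by
  have hl0 : 0 < l := by linarith
  rw [cantorFn_eq, cyl_two]
  interval_cases b
  · have hle : cyl l 1 0 y ≤ 1 / 2 := by
      rw [cyl_one_zero, div_le_div_iff₀ hl0 two_pos]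
      linarith [hy.2]
    rw [expand, if_pos hle, if_pos hle, cyl_one_zero, mul_div_cancel₀ _ hl0.ne']
    simp
  · have hgt : ¬ cyl l 1 1 y ≤ 1 / 2 := by
      rw [cyl_one_one, ← add_div, not_le, div_lt_div_iff₀ two_pos hl0]
      linarith [hy.1]
    rw [expand, if_neg hgt, if_neg hgt, cyl_one_one, ← add_div, mul_div_cancel₀ _ hl0.ne']
    simp

lemma cantorFn_cyl (hl : 2 < l) {n k : ℕ} (hk : k < 2 ^ n) {y : ℝ} (hy : y ∈ Icc (0 : ℝ) 1) :
    cantorFn l (cyl l n k y) = cyl 2 n k (cantorFn l y) := by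
  have hl0 : l ≠ 0 := by positivity
  induction n generalizing k y with
  | zero =>
    obtain rfl : k = 0 := by simpa using hk
    rw [cyl_zero_zero, cyl_zero_zero]
  | succ n ih =>
    rw [pow_succ] at hk
    have hl1 : 1 ≤ l := by linarith
    obtain ⟨j, rfl | rfl⟩ := Nat.even_or_odd' k
    · rw [cyl_succ_two_mul hl0, cyl_succ_two_mul two_ne_zero,
        ih (by omega) (cyl_one_mem_Icc hl1 two_pos hy), cantorFn_cyl_one hl two_pos hy]
    · rw [cyl_succ_two_mul_add_one hl0, cyl_succ_two_mul_add_one two_ne_zero,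
        ih (by omega) (cyl_one_mem_Icc hl1 one_lt_two hy), cantorFn_cyl_one hl one_lt_two hy]

lemma cantorFn_zero (hl : 2 < l) : cantorFn l 0 = 0 := by
  have h := cantorFn_cyl_one hl two_pos (left_mem_Icc.2 (zero_le_one (α := ℝ)))
  rw [cyl_zero_left, cyl_one_zero] at h
  linarith

lemma cantorFn_one (hl : 2 < l) : cantorFn l 1 = 1 := by
  have h := cantorFn_cyl_one hl one_lt_two (right_mem_Icc.2 (zero_le_one (α := ℝ)))
  rw [show cyl l 1 1 1 = 1 from cyl_last (by positivity) 1, cyl_one_one] at h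
  linarith

end CantorFunction

end CentralCantor

namespace IsCentralCantor

variable {l : ℝ} {C : Set ℝ}

lemma cantorFn_monotoneOn (hC : IsCentralCantor l C) (hl : 2 < l) :
    MonotoneOn (cantorFn l) C := by
  intro x hx y hy hxy
  obtain rfl | hxy := hxy.eq_or_lt
  · rfl
  have hl0 : l ≠ 0 := by positivity
  have hl1 : 1 < l := by linarith
  have hsub := hC.subset_Icc hl1
  obtain ⟨n, hn⟩ : ∃ n : ℕ, 1 / l ^ n < y - x :=
    ((tendsto_one_div_pow_atTop hl1).eventually_lt_const (sub_pos.2 hxy)).exists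
  obtain ⟨j, hj, a, ha, rfl⟩ := hC.exists_cyl hl0 n hx
  obtain ⟨k, hk, b, hb, rfl⟩ := hC.exists_cyl hl0 n hy
  have hjk : ((j + 1 : ℕ) : ℝ) ≤ k :=
    Nat.cast_le.2 (lt_of_cyl_lt_cyl hl (hsub ha) (hsub hb) hn)
  rw [cantorFn_cyl hl hj (hsub ha), cantorFn_cyl hl hk (hsub hb), cyl_two, cyl_two]
  push_cast at hjk
  refine div_le_div_of_nonneg_right ?_ (by positivity)
  linarith [(cantorFn_mem_Icc l a).2, (cantorFn_mem_Icc l b).1]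

lemma cantorFn_lt_of_mem_Ioo (hC : IsCentralCantor l C) (hl : 2 < l) {x y z : ℝ} (hx : x ∈ C)
    (hy : y ∈ C) (hz : z ∈ C) (hzxy : z ∈ Ioo x y) : cantorFn l x < cantorFn l y := by
  have hl0 : l ≠ 0 := by positivity
  have hl1 : 1 < l := by linarith
  have hsub := hC.subset_Icc hl1
  obtain ⟨n, hnx, hny⟩ : ∃ n : ℕ, 1 / l ^ n < z - x ∧ 1 / l ^ n < y - z :=
    ((tendsto_one_div_pow_atTop hl1).eventually_lt_const (sub_pos.2 hzxy.1)).and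
      ((tendsto_one_div_pow_atTop hl1).eventually_lt_const (sub_pos.2 hzxy.2)) |>.exists
  obtain ⟨i, hi, a, ha, rfl⟩ := hC.exists_cyl hl0 n hx
  obtain ⟨j, -, b, hb, rfl⟩ := hC.exists_cyl hl0 n hz
  obtain ⟨k, hk, c, hc, rfl⟩ := hC.exists_cyl hl0 n hy
  have hij : i < j := lt_of_cyl_lt_cyl hl (hsub ha) (hsub hb) hnx
  have hjk : j < k := lt_of_cyl_lt_cyl hl (hsub hb) (hsub hc) hny
  have hik : ((i + 2 : ℕ) : ℝ) ≤ k := Nat.cast_le.2 (by omega)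
  rw [cantorFn_cyl hl hi (hsub ha), cantorFn_cyl hl hk (hsub hc), cyl_two, cyl_two]
  push_cast at hik
  refine div_lt_div_of_pos_right ?_ (by positivity)
  linarith [(cantorFn_mem_Icc l a).2, (cantorFn_mem_Icc l c).1]

lemma cantorFn_eq_iff_isGap (hC : IsCentralCantor l C) (hl : 2 < l) {x y : ℝ} (hx : x ∈ C)
    (hy : y ∈ C) (hxy : x < y) : cantorFn l x = cantorFn l y ↔ IsGap C x y := by
  refine ⟨fun h => ⟨hx, hy, hxy, fun z hz hzxy =>
    (hC.cantorFn_lt_of_mem_Ioo hl hx hy hz hzxy).ne h⟩, fun h => ?_⟩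
  obtain ⟨n, k, hk, rfl, rfl⟩ := hC.exists_cyl_succ_of_isGap hl h
  rw [cantorFn_cyl hl (by omega) (right_mem_Icc.2 zero_le_one), cantorFn_one hl,
    cantorFn_cyl hl hk (left_mem_Icc.2 zero_le_one), cantorFn_zero hl, cyl_two, cyl_two]
  push_cast
  ring

lemma le_cantorFn_of_cyl_one_lt (hC : IsCentralCantor l C) (hl : 2 < l) {n k : ℕ} {z : ℝ}
    (hz : z ∈ C) (hkz : cyl l n k 1 < z) : ((k : ℝ) + 1) / 2 ^ n ≤ cantorFn l z := by
  obtain ⟨j, hj, y, hy, rfl⟩ := hC.exists_cyl (by positivity) n hz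
  have hy01 := hC.subset_Icc (by linarith) hy
  have hkj : ((k + 1 : ℕ) : ℝ) ≤ j := by
    rw [Nat.cast_le, Nat.add_one_le_iff]
    by_contra! hjk
    obtain rfl | hjk := hjk.eq_or_lt
    · exact ((cyl_strictMono (by positivity) n j).monotone hy01.2).not_gt hkz
    · exact (cyl_lt_cyl hl n hjk hy01.2 zero_le_one).not_gt hkz
  rw [cantorFn_cyl hl hj hy01, cyl_two]
  refine div_le_div_of_nonneg_right ?_ (by positivity)
  push_cast at hkj
  linarith [(cantorFn_mem_Icc l y).1]

lemma abs_cantorFn_sub_le (hC : IsCentralCantor l C) (hl : 2 < l) {t x : ℝ} (ht : t ∈ Ico 0 1)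
    (hx : x ∈ C) (hlub : IsLUB {z ∈ C | cantorFn l z ≤ t} x) (n : ℕ) :
    |cantorFn l x - t| ≤ 1 / 2 ^ n := by
  have hl0 : l ≠ 0 := by positivity
  have hl1 : 1 < l := by linarith
  have hpow : (0 : ℝ) < 2 ^ n := by positivity
  set k := ⌊2 ^ n * t⌋₊
  have hkt : k / 2 ^ n ≤ t :=
    (div_le_iff₀' hpow).2 (Nat.floor_le (mul_nonneg hpow.le ht.1))
  have htk : t < (k + 1) / 2 ^ n := (lt_div_iff₀' hpow).2 (Nat.lt_floor_add_one _)
  have hk : k < 2 ^ n := by exact_mod_cast (div_lt_one hpow).1 (hkt.trans_lt ht.2)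
  have hlower : cyl l n k 0 ≤ x := by
    refine hlub.1 ⟨hC.cyl_mem hl0 hk (hC.zero_mem hl1), ?_⟩
    rwa [cantorFn_cyl hl hk (left_mem_Icc.2 zero_le_one), cantorFn_zero hl, cyl_two, add_zero]
  have hupper : x ≤ cyl l n k 1 := hlub.2 fun z hz => by
    by_contra! h
    linarith [hC.le_cantorFn_of_cyl_one_lt hl hz.1 h, hz.2]
  obtain ⟨y, hy, rfl⟩ := hC.exists_cyl_eq_of_mem_Icc hl hx ⟨hlower, hupper⟩
  have hp := cantorFn_mem_Icc l y
  rw [cantorFn_cyl hl hk (hC.subset_Icc hl1 hy), cyl_two, abs_le]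
  rw [add_div] at htk ⊢
  have := div_nonneg hp.1 hpow.le
  have := div_le_div_of_nonneg_right hp.2 hpow.le
  constructor <;> linarith

lemma cantorFn_surjOn (hC : IsCentralCantor l C) (hl : 2 < l) :
    SurjOn (cantorFn l) C (Icc 0 1) := by
  rintro t ⟨ht0, ht1⟩
  have hl1 : 1 < l := by linarith
  obtain rfl | ht1 := ht1.eq_or_lt
  · exact ⟨1, hC.one_mem hl1, cantorFn_one hl⟩
  set S := {z ∈ C | cantorFn l z ≤ t}
  have hS0 : S.Nonempty := ⟨0, hC.zero_mem hl1, (cantorFn_zero hl).trans_le ht0⟩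
  have hSb : BddAbove S := ⟨1, fun z hz => (hC.subset_Icc hl1 hz.1).2⟩
  have hx : sSup S ∈ C := hC.1.isClosed.closure_subset_iff.2 (sep_subset _ _)
    (csSup_mem_closure hS0 hSb)
  have hclose := hC.abs_cantorFn_sub_le hl ⟨ht0, ht1⟩ hx (isLUB_csSup hS0 hSb)
  refine ⟨sSup S, hx, sub_eq_zero.1 (abs_nonpos_iff.1 ?_)⟩
  exact ge_of_tendsto' (tendsto_one_div_pow_atTop one_lt_two) hclose

end IsCentralCantor

/-! ### Rigidity of `C¹` maps -/

namespace CentralCantor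

/-- For some `N` the map `g` carries every level-`N` cylinder of `C` onto a cylinder by the
canonical affine map: the description of an element of Thompson's group by a table of words. For
`l = 2` and `C = Icc 0 1` the cylinders are the standard dyadic intervals. -/
def HasTable (l : ℝ) (C : Set ℝ) (g : ℝ → ℝ) : Prop :=
  ∃ N, ∀ k < 2 ^ N, ∃ M, ∃ j < 2 ^ M, ∀ y ∈ C, g (cyl l N k y) = cyl l M j y

end CentralCantor

lemma slope_lt_mul_slope_of_Icc_subset {g : ℝ → ℝ} (hg : ContDiff ℝ 1 g)
    (hpos : ∀ x, 0 < deriv g x) {c : ℝ} (hc : 1 < c) (a b : ℝ) :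
    ∃ δ > 0, ∀ u v, Icc u v ⊆ Icc a b → v - u < δ → ∀ x ∈ Icc u v, ∀ y ∈ Icc u v,
      ∀ x' ∈ Icc u v, ∀ y' ∈ Icc u v, x < y → x' < y' → slope g x y < c * slope g x' y' := by
  have hcont : Continuous fun x => Real.log (deriv g x) :=
    (hg.continuous_deriv le_rfl).log fun x => (hpos x).ne'
  obtain ⟨δ, hδ, hlog⟩ := Metric.uniformContinuousOn_iff.1
    (isCompact_Icc.uniformContinuousOn_of_continuous (hcont.continuousOn (s := Icc a b)))
    (Real.log c) (Real.log_pos hc)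
  have hmean {x y : ℝ} (hxy : x < y) : ∃ ξ ∈ Ioo x y, slope g x y = deriv g ξ := by
    obtain ⟨ξ, hξ, h⟩ := exists_deriv_eq_slope g hxy hg.continuous.continuousOn
      (hg.differentiable one_ne_zero).differentiableOn
    exact ⟨ξ, hξ, by rw [slope_def_field, h]⟩
  refine ⟨δ, hδ, fun u v huv hlen x hx y hy x' hx' y' hy' hxy hxy' => ?_⟩
  obtain ⟨ξ, hξ, hξs⟩ := hmean hxy
  obtain ⟨ξ', hξ', hξs'⟩ := hmean hxy'
  have hmem : ξ ∈ Icc u v := ⟨hx.1.trans hξ.1.le, hξ.2.le.trans hy.2⟩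
  have hmem' : ξ' ∈ Icc u v := ⟨hx'.1.trans hξ'.1.le, hξ'.2.le.trans hy'.2⟩
  have hdist : dist ξ ξ' < δ := (Real.dist_le_of_mem_Icc hmem hmem').trans_lt hlen
  have hlt := (abs_lt.1 (hlog ξ (huv hmem) ξ' (huv hmem') hdist)).2
  rw [hξs, hξs', ← Real.log_lt_log_iff (hpos ξ) (mul_pos (by linarith) (hpos ξ')),
    Real.log_mul (by linarith) (hpos ξ').ne']
  linarith

namespace IsCentralCantor

variable {l : ℝ} {C : Set ℝ}

lemma dist_cyl_le_of_forall_isGap_eq (hC : IsCentralCantor l C) (hl : 2 < l) {X : Type*}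
    [PseudoMetricSpace X] {E : ℝ → X} {K : NNReal} (hE : LipschitzOnWith K E C)
    (hgap : ∀ x y, IsGap C x y → E x = E y) {n k : ℕ} (hk : k < 2 ^ n) {y : ℝ} (hy : y ∈ C) :
    dist (E (cyl l n k y)) (E 0) ≤ (k + 1) * (K / l ^ n) := by
  have hl0 : 0 < l := by linarith
  have hl1 : 1 < l := by linarith
  have hcyl {k : ℕ} (hk : k < 2 ^ n) {y : ℝ} (hy : y ∈ C) :
      dist (E (cyl l n k y)) (E (cyl l n k 0)) ≤ K / l ^ n := by
    have hy01 := hC.subset_Icc hl1 hy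
    refine (hE.dist_le_mul _ (hC.cyl_mem hl0.ne' hk hy) _
      (hC.cyl_mem hl0.ne' hk (hC.zero_mem hl1))).trans ?_
    rw [Real.dist_eq, cyl_sub_cyl, sub_zero, abs_of_nonneg (div_nonneg hy01.1 (by positivity)),
      ← mul_div_assoc]
    gcongr
    exact mul_le_of_le_one_right K.2 hy01.2
  induction k generalizing y with
  | zero => simpa [cyl_zero_left] using hcyl hk hy
  | succ k ih =>
    calc dist (E (cyl l n (k + 1) y)) (E 0)
        ≤ dist (E (cyl l n (k + 1) y)) (E (cyl l n (k + 1) 0))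
          + dist (E (cyl l n (k + 1) 0)) (E 0) := dist_triangle _ _ _
      _ ≤ K / l ^ n + (k + 1) * (K / l ^ n) := by
        refine add_le_add (hcyl hk hy) ?_
        rw [← hgap _ _ (hC.isGap_cyl_succ hl hk)]
        exact ih (by omega) (hC.one_mem hl1)
      _ = ((k + 1 : ℕ) + 1) * (K / l ^ n) := by push_cast; ring

/-- The total length `(2 / l) ^ n` of the cylinders of level `n` tends to zero, so a Lipschitz
function can only vary by jumping across gaps. -/
lemma eq_of_forall_isGap_eq (hC : IsCentralCantor l C) (hl : 2 < l) {X : Type*} [MetricSpace X]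
    {E : ℝ → X} {K : NNReal} (hE : LipschitzOnWith K E C)
    (hgap : ∀ x y, IsGap C x y → E x = E y) {x : ℝ} (hx : x ∈ C) : E x = E 0 := by
  have hl0 : 0 < l := by linarith
  have hlim : Tendsto (fun n : ℕ => K * (2 / l) ^ n) atTop (𝓝 0) := by
    simpa using (tendsto_pow_atTop_nhds_zero_of_lt_one (by positivity)
      ((div_lt_one hl0).2 hl)).const_mul (K : ℝ)
  refine dist_le_zero.1 (ge_of_tendsto' hlim fun n => ?_)
  obtain ⟨k, hk, y, hy, rfl⟩ := hC.exists_cyl hl0.ne' n hx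
  have hk' : (k : ℝ) + 1 ≤ 2 ^ n := by exact_mod_cast hk
  calc dist (E (cyl l n k y)) (E 0)
      ≤ (k + 1) * (K / l ^ n) := hC.dist_cyl_le_of_forall_isGap_eq hl hE hgap hk hy
    _ ≤ 2 ^ n * (K / l ^ n) := by gcongr
    _ = K * (2 / l) ^ n := by rw [div_pow]; ring

lemma exists_slope_eq_zpow_of_isGap (hC : IsCentralCantor l C) (hl : 2 < l) {g : ℝ → ℝ} {x y : ℝ}
    (hxy : IsGap C x y) (hgxy : IsGap C (g x) (g y)) : ∃ e : ℤ, slope g x y = l ^ e := by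
  obtain ⟨n, k, -, rfl, rfl⟩ := hC.exists_cyl_middle_of_isGap hl hxy
  obtain ⟨m, j, -, hx, hy⟩ := hC.exists_cyl_middle_of_isGap hl hgxy
  have hl0 : l ≠ 0 := by positivity
  have hmid := sub_ne_zero.2 (hC.isGap_middle hl).lt.ne'
  refine ⟨n - m, ?_⟩
  rw [slope_def_field, ← hx, ← hy, cyl_sub_cyl, cyl_sub_cyl, zpow_sub₀ hl0, zpow_natCast,
    zpow_natCast]
  field_simp

lemma slope_eq_slope_of_isGap (hC : IsCentralCantor l C) (hl : 2 < l) {g : ℝ → ℝ} {x y x' y' : ℝ}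
    (hxy : IsGap C x y) (hgxy : IsGap C (g x) (g y)) (hxy' : IsGap C x' y')
    (hgxy' : IsGap C (g x') (g y')) (hlt : slope g x y < l * slope g x' y')
    (hlt' : slope g x' y' < l * slope g x y) : slope g x y = slope g x' y' := by
  obtain ⟨e, he⟩ := hC.exists_slope_eq_zpow_of_isGap hl hxy hgxy
  obtain ⟨e', he'⟩ := hC.exists_slope_eq_zpow_of_isGap hl hxy' hgxy'
  have hl1 : 1 < l := by linarith
  rw [he, he', ← zpow_one_add₀ (by positivity), zpow_lt_zpow_iff_right₀ hl1] at hlt hlt'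
  rw [he, he', show e = e' by omega]

lemma eqOn_cyl_of_slope_eq (hC : IsCentralCantor l C) (hl : 2 < l) {g : ℝ → ℝ}
    (hg : ContDiff ℝ 1 g) {N k M j : ℕ} {w : ℝ} (hw : w ∈ C)
    (hgw : g (cyl l N k w) = cyl l M j w)
    (hslope : ∀ x y, IsGap C x y → slope g (cyl l N k x) (cyl l N k y) = l ^ N / l ^ M) {y : ℝ}
    (hy : y ∈ C) : g (cyl l N k y) = cyl l M j y := by
  have hE : ContDiff ℝ 1 fun y => g (cyl l N k y) - y / l ^ M := by
    unfold cyl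
    fun_prop
  obtain ⟨K, hK⟩ := LocallyLipschitzOn.exists_lipschitzOnWith_of_compact hC.1
    (hE.locallyLipschitz.locallyLipschitzOn (s := C))
  have hjump (x y : ℝ) (hxy : IsGap C x y) :
      g (cyl l N k x) - x / l ^ M = g (cyl l N k y) - y / l ^ M := by
    have h := hslope x y hxy
    have hne : y - x ≠ 0 := sub_ne_zero.2 hxy.lt.ne'
    rw [slope_def_field, cyl_sub_cyl] at h
    field_simp at h ⊢
    linarith
  have hconst := (hC.eq_of_forall_isGap_eq hl hK hjump hy).trans
    (hC.eq_of_forall_isGap_eq hl hK hjump hw).symm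
  have hsub := cyl_sub_cyl l M j y w
  rw [sub_div] at hsub
  rw [hgw] at hconst
  linarith

lemma exists_forall_isGap_slope_cyl_eq (hC : IsCentralCantor l C) (hl : 2 < l) {g : ℝ → ℝ}
    (hg : ContDiff ℝ 1 g) (hpos : ∀ x, 0 < deriv g x)
    (himage : ∀ x y, IsGap C x y → IsGap C (g x) (g y)) :
    ∃ N, ∀ k < 2 ^ N, ∀ x y x' y', IsGap C x y → IsGap C x' y' →
      slope g (cyl l N k x) (cyl l N k y) = slope g (cyl l N k x') (cyl l N k y') := by
  have hl1 : 1 < l := by linarith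
  have hl0 : 0 < l := by linarith
  obtain ⟨δ, hδ, hslope⟩ := slope_lt_mul_slope_of_Icc_subset hg hpos hl1 0 1
  obtain ⟨N, hN⟩ : ∃ n : ℕ, 1 / l ^ n < δ :=
    ((tendsto_one_div_pow_atTop hl1).eventually_lt_const hδ).exists
  refine ⟨N, fun k hk => ?_⟩
  have hmem {z : ℝ} (hz : z ∈ C) : cyl l N k z ∈ Icc (cyl l N k 0) (cyl l N k 1) :=
    ⟨(cyl_strictMono hl0 N k).monotone (hC.subset_Icc hl1 hz).1,
      (cyl_strictMono hl0 N k).monotone (hC.subset_Icc hl1 hz).2⟩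
  have hsub : Icc (cyl l N k 0) (cyl l N k 1) ⊆ Icc 0 1 := Icc_subset_Icc
    (hC.subset_Icc hl1 (hC.cyl_mem hl0.ne' hk (hC.zero_mem hl1))).1
    (hC.subset_Icc hl1 (hC.cyl_mem hl0.ne' hk (hC.one_mem hl1))).2
  have hlt {x y x' y' : ℝ} (h : IsGap C x y) (h' : IsGap C x' y') :
      slope g (cyl l N k x) (cyl l N k y) < l * slope g (cyl l N k x') (cyl l N k y') :=
    hslope _ _ hsub (by rwa [cyl_sub_cyl, sub_zero]) _ (hmem h.left_mem) _ (hmem h.right_mem) _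
      (hmem h'.left_mem) _ (hmem h'.right_mem) (cyl_strictMono hl0 N k h.lt)
      (cyl_strictMono hl0 N k h'.lt)
  intro x y x' y' h h'
  have h_k := hC.isGap_cyl hl hk h
  have h_k' := hC.isGap_cyl hl hk h'
  exact hC.slope_eq_slope_of_isGap hl h_k (himage _ _ h_k) h_k' (himage _ _ h_k') (hlt h h')
    (hlt h' h)

theorem hasTable_of_contDiff (hC : IsCentralCantor l C) (hl : 2 < l) {g : ℝ → ℝ}
    (hg : ContDiff ℝ 1 g) (hpos : ∀ x, 0 < deriv g x) (hgC : g '' C = C) : HasTable l C g := by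
  have hmono : StrictMonoOn g C := (strictMono_of_deriv_pos hpos).strictMonoOn C
  have himage (x y : ℝ) (h : IsGap C x y) : IsGap C (g x) (g y) :=
    (isGap_image_iff hmono hgC h.left_mem h.right_mem).2 h
  obtain ⟨N, hN⟩ := hC.exists_forall_isGap_slope_cyl_eq hl hg hpos himage
  refine ⟨N, fun k hk => ?_⟩
  have hmid := hC.isGap_middle hl
  obtain ⟨M, j, hj, hleft, hright⟩ :=
    hC.exists_cyl_middle_of_isGap hl (himage _ _ (hC.isGap_cyl hl hk hmid))
  refine ⟨M, j, hj, fun y hy => hC.eqOn_cyl_of_slope_eq hl hg hmid.left_mem hleft.symm ?_ hy⟩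
  intro x y hxy
  have hne := sub_ne_zero.2 hmid.lt.ne'
  rw [hN k hk x y _ _ hxy hmid, slope_def_field, ← hleft, ← hright, cyl_sub_cyl, cyl_sub_cyl]
  field_simp

end IsCentralCantor

namespace CentralCantor

/-- `g` restricts to an increasing bijection of `C` onto itself which the Cantor function of `C_l`
semiconjugates to the self-map `f` of `[0, 1]`. -/
structure IsCantorLift (l : ℝ) (C : Set ℝ) (f g : ℝ → ℝ) : Prop where
  strictMonoOn : StrictMonoOn g C
  image_eq : g '' C = C
  cantorFn_apply : ∀ x ∈ C, cantorFn l (g x) = f (cantorFn l x)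

namespace IsCantorLift

variable {l : ℝ} {C : Set ℝ} {f f' g g' : ℝ → ℝ}

lemma mapsTo (h : IsCantorLift l C f g) : MapsTo g C C :=
  mapsTo_iff_image_subset.2 h.image_eq.subset

lemma comp (h : IsCantorLift l C f g) (h' : IsCantorLift l C f' g') :
    IsCantorLift l C (f ∘ f') (g ∘ g') where
  strictMonoOn := h.strictMonoOn.comp h'.strictMonoOn h'.mapsTo
  image_eq := by rw [image_comp, h'.image_eq, h.image_eq]
  cantorFn_apply x hx := by
    simp only [Function.comp_apply]
    rw [h.cantorFn_apply _ (h'.mapsTo hx), h'.cantorFn_apply x hx]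

lemma eqOn_Icc (h : IsCantorLift l C f g) (h' : IsCantorLift l C f' g')
    (hsurj : SurjOn (cantorFn l) C (Icc 0 1)) (hgg' : EqOn g g' C) : EqOn f f' (Icc 0 1) := by
  intro t ht
  obtain ⟨x, hx, rfl⟩ := hsurj ht
  rw [← h.cantorFn_apply x hx, ← h'.cantorFn_apply x hx, hgg' hx]

/-- If `g x < g' x = g z`, then `g x < g' x < g' z` are three points of `C` with the same image
under the Cantor function. -/
lemma le_of_injOn (hC : IsCentralCantor l C) (hl : 2 < l) (hf : InjOn f (Icc 0 1))
    (h : IsCantorLift l C f g) (h' : IsCantorLift l C f g') {x : ℝ} (hx : x ∈ C) :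
    g' x ≤ g x := by
  by_contra! hlt
  obtain ⟨z, hz, hzx⟩ : g' x ∈ g '' C := h.image_eq.symm ▸ h'.mapsTo hx
  have hxz : x < z := (h.strictMonoOn.lt_iff_lt hx hz).1 (hzx ▸ hlt)
  have hpz : cantorFn l z = cantorFn l x := hf (cantorFn_mem_Icc l z) (cantorFn_mem_Icc l x) <| by
    rw [← h.cantorFn_apply z hz, hzx, h'.cantorFn_apply x hx]
  refine (hC.cantorFn_lt_of_mem_Ioo hl (h.mapsTo hx) (h'.mapsTo hz) (h'.mapsTo hx)
    ⟨hlt, h'.strictMonoOn hx hz hxz⟩).ne ?_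
  rw [h.cantorFn_apply x hx, h'.cantorFn_apply z hz, hpz]

lemma eqOn_of_injOn (hC : IsCentralCantor l C) (hl : 2 < l) (hf : InjOn f (Icc 0 1))
    (h : IsCantorLift l C f g) (h' : IsCantorLift l C f g') : EqOn g g' C := fun _ hx =>
  (le_of_injOn hC hl hf h' h hx).antisymm (le_of_injOn hC hl hf h h' hx)

end IsCantorLift

end CentralCantor

namespace IsHigmanThompson

variable {f : ℝ → ℝ}

lemma of_hasTable (hf0 : f 0 = 0) (hf1 : f 1 = 1) (hf : StrictMonoOn f (Icc 0 1))
    (htab : HasTable 2 (Icc 0 1) f) : IsHigmanThompson 2 f := by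
  obtain ⟨N, hN⟩ := htab
  have hpow : (0 : ℝ) < 2 ^ N := by positivity
  refine ⟨hf0, hf1, hf, 2 ^ N, fun i => i / 2 ^ N, by positivity, by simp, ?_, fun i _ => ?_,
    fun i _ => ⟨i, N, by simp⟩, fun i hi => ?_⟩
  · push_cast
    exact div_self hpow.ne'
  · push_cast
    gcongr
    exact lt_add_one _
  obtain ⟨M, j, -, hij⟩ := hN i hi
  refine ⟨N - M, fun t ht => ?_⟩
  obtain ⟨τ, hτ, rfl⟩ : ∃ τ ∈ Icc (0 : ℝ) 1, cyl 2 N i τ = t := by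
    push_cast at ht
    rw [mem_Icc, div_le_iff₀' hpow, le_div_iff₀' hpow] at ht
    refine ⟨2 ^ N * t - i, ⟨by linarith [ht.1], by linarith [ht.2]⟩, ?_⟩
    rw [cyl_two, add_sub_cancel, mul_div_cancel_left₀ _ hpow.ne']
  have hi0 : (i : ℝ) / 2 ^ N = cyl 2 N i 0 := by rw [cyl_two, add_zero]
  beta_reduce
  rw [hi0, hij 0 (left_mem_Icc.2 zero_le_one), hij τ hτ, ← sub_eq_iff_eq_add', cyl_sub_cyl,
    cyl_sub_cyl, Nat.cast_ofNat, zpow_sub₀ two_ne_zero, zpow_natCast, zpow_natCast]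
  field_simp

end IsHigmanThompson

namespace IsCentralCantor

variable {l : ℝ} {C : Set ℝ} {g : ℝ → ℝ}

lemma cantorFn_apply_eq_iff (hC : IsCentralCantor l C) (hl : 2 < l) (hg : StrictMonoOn g C)
    (hgC : g '' C = C) {x y : ℝ} (hx : x ∈ C) (hy : y ∈ C) :
    cantorFn l (g x) = cantorFn l (g y) ↔ cantorFn l x = cantorFn l y := by
  wlog hxy : x ≤ y generalizing x y
  · rw [eq_comm, this hy hx (le_of_not_ge hxy), eq_comm]
  obtain rfl | hxy := hxy.eq_or_lt
  · simp
  have hmem {z : ℝ} (hz : z ∈ C) : g z ∈ C := hgC ▸ mem_image_of_mem g hz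
  rw [hC.cantorFn_eq_iff_isGap hl (hmem hx) (hmem hy) (hg hx hy hxy),
    hC.cantorFn_eq_iff_isGap hl hx hy hxy, isGap_image_iff hg hgC hx hy]

lemma exists_isCantorLift_of_strictMonoOn (hC : IsCentralCantor l C) (hl : 2 < l)
    (hg : StrictMonoOn g C) (hgC : g '' C = C) :
    ∃ f, StrictMonoOn f (Icc 0 1) ∧ IsCantorLift l C f g := by
  have hsurj := hC.cantorFn_surjOn hl
  set q := Function.invFunOn (cantorFn l) C
  have hqC : ∀ t ∈ Icc (0 : ℝ) 1, q t ∈ C := hsurj.mapsTo_invFunOn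
  have hpq : ∀ t ∈ Icc (0 : ℝ) 1, cantorFn l (q t) = t := hsurj.rightInvOn_invFunOn
  refine ⟨fun t => cantorFn l (g (q t)), fun s hs t ht hst => ?_, hg, hgC, fun x hx => ?_⟩
  · have hq : q s < q t := by
      by_contra! h
      exact hst.not_ge (hpq s hs ▸ hpq t ht ▸ hC.cantorFn_monotoneOn hl (hqC t ht) (hqC s hs) h)
    have hmem {z : ℝ} (hz : z ∈ C) : g z ∈ C := hgC ▸ mem_image_of_mem g hz
    refine (hC.cantorFn_monotoneOn hl (hmem (hqC s hs)) (hmem (hqC t ht))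
      (hg (hqC s hs) (hqC t ht) hq).le).lt_of_ne fun h => hst.ne ?_
    rw [← hpq s hs, ← hpq t ht]
    exact (hC.cantorFn_apply_eq_iff hl hg hgC (hqC s hs) (hqC t ht)).1 h
  · have hp := cantorFn_mem_Icc l x
    exact ((hC.cantorFn_apply_eq_iff hl hg hgC (hqC _ hp) hx).2 (hpq _ hp)).symm

theorem exists_isHigmanThompson_isCantorLift (hC : IsCentralCantor l C) (hl : 2 < l)
    (hg : StrictMonoOn g C) (hgC : g '' C = C) (htab : HasTable l C g) :
    ∃ f, IsHigmanThompson 2 f ∧ IsCantorLift l C f g := by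
  obtain ⟨f, hf, hlift⟩ := hC.exists_isCantorLift_of_strictMonoOn hl hg hgC
  have hl1 : 1 < l := by linarith
  have hsub := hC.subset_Icc hl1
  refine ⟨f, .of_hasTable ?_ ?_ hf ?_, hlift⟩
  · have hg0 : g 0 = 0 :=
      (hgC ▸ hg.monotoneOn.map_isLeast (hC.isLeast_zero hl1)).unique (hC.isLeast_zero hl1)
    rw [← cantorFn_zero hl, ← hlift.cantorFn_apply 0 (hC.zero_mem hl1), hg0]
  · have hg1 : g 1 = 1 := (hgC ▸ hg.monotoneOn.map_isGreatest (hC.isGreatest_one hl1)).unique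
      (hC.isGreatest_one hl1)
    rw [← cantorFn_one hl, ← hlift.cantorFn_apply 1 (hC.one_mem hl1), hg1]
  · obtain ⟨N, hN⟩ := htab
    refine ⟨N, fun k hk => ?_⟩
    obtain ⟨M, j, hj, hkj⟩ := hN k hk
    refine ⟨M, j, hj, fun t ht => ?_⟩
    obtain ⟨y, hy, rfl⟩ := hC.cantorFn_surjOn hl ht
    rw [← cantorFn_cyl hl hk (hsub hy), ← cantorFn_cyl hl hj (hsub hy), ← hkj y hy,
      hlift.cantorFn_apply _ (hC.cyl_mem (by positivity) hk hy)]

end IsCentralCantor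

/-! ### Thompson's group on dyadic intervals -/

namespace CentralCantor

/-- `r` is a dyadic rational, phrased so that a common denominator for finitely many dyadic
rationals is obtained by intersecting `Filter.Eventually` statements. -/
def IsDyadic (r : ℝ) : Prop :=
  ∀ᶠ N : ℕ in atTop, ∃ a : ℤ, 2 ^ N * r = a

namespace IsDyadic

variable {r s : ℝ}

lemma intCast_div_two_pow (a : ℤ) (e : ℕ) : IsDyadic (a / 2 ^ e) := by
  filter_upwards [eventually_ge_atTop e] with N hN
  obtain ⟨d, rfl⟩ := Nat.exists_eq_add_of_le hN
  refine ⟨2 ^ d * a, ?_⟩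
  push_cast
  rw [pow_add]
  field_simp

lemma add (hr : IsDyadic r) (hs : IsDyadic s) : IsDyadic (r + s) := by
  filter_upwards [hr, hs] with N ⟨a, ha⟩ ⟨b, hb⟩
  exact ⟨a + b, by rw [mul_add, ha, hb, Int.cast_add]⟩

lemma sub (hr : IsDyadic r) (hs : IsDyadic s) : IsDyadic (r - s) := by
  filter_upwards [hr, hs] with N ⟨a, ha⟩ ⟨b, hb⟩
  exact ⟨a - b, by rw [mul_sub, ha, hb, Int.cast_sub]⟩

lemma two_zpow_mul (hr : IsDyadic r) (k : ℤ) : IsDyadic (2 ^ k * r) := by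
  obtain ⟨N₀, hN₀⟩ := eventually_atTop.1 hr
  filter_upwards [eventually_ge_atTop (N₀ + k.natAbs)] with N hN
  obtain ⟨M, hM⟩ : ∃ M : ℕ, (M : ℤ) = N + k := ⟨(N + k).toNat, Int.toNat_of_nonneg (by omega)⟩
  obtain ⟨a, ha⟩ := hN₀ M (by omega)
  exact ⟨a, by rw [← ha, ← mul_assoc, ← zpow_natCast, ← zpow_natCast, hM, zpow_add₀ two_ne_zero]⟩

end IsDyadic

lemma exists_le_and_lt_succ {α : Type*} [LinearOrder α] {x : ℕ → α} {z : α} (hz : x 0 ≤ z) {n : ℕ}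
    (hn : 0 < n) : ∃ i < n, x i ≤ z ∧ (i + 1 < n → z < x (i + 1)) := by
  induction n, hn using Nat.le_induction with
  | base => exact ⟨0, one_pos, hz, fun h => absurd h (lt_irrefl 1)⟩
  | succ n hn ih =>
    by_cases hzn : x n ≤ z
    · exact ⟨n, n.lt_succ_self, hzn, fun h => absurd h (lt_irrefl _)⟩
    · obtain ⟨i, hi, hiz, hzi⟩ := ih
      refine ⟨i, hi.trans n.lt_succ_self, hiz, fun _ => ?_⟩
      obtain rfl | hi := (Nat.succ_le_of_lt hi).eq_or_lt
      · exact not_le.1 hzn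
      · exact hzi hi

lemma eventually_cyl_two_of_affine {f : ℝ → ℝ} {u v b : ℝ} {κ : ℤ} (hv : IsDyadic v)
    (hb : IsDyadic b) (hf : ∀ t ∈ Icc u v, f t = 2 ^ κ * t + b) :
    ∀ᶠ N : ℕ in atTop, ∀ k : ℕ, (k : ℝ) / 2 ^ N ∈ Ico u v →
      ∃ (M : ℕ) (j : ℤ), ∀ τ ∈ Icc (0 : ℝ) 1, f (cyl 2 N k τ) = (j + τ) / 2 ^ M := by
  filter_upwards [hv, hb.two_zpow_mul (-κ), eventually_ge_atTop κ.natAbs] with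
    N ⟨c, hc⟩ ⟨d, hd⟩ hN k hk
  have hpow : (0 : ℝ) < 2 ^ N := by positivity
  obtain ⟨M, hM⟩ : ∃ M : ℕ, (M : ℤ) = N - κ := ⟨(N - κ).toNat, Int.toNat_of_nonneg (by omega)⟩
  have hkc : (k : ℝ) + 1 ≤ c := by
    have : (k : ℝ) < c := by
      rw [← hc, ← div_lt_iff₀' hpow]
      exact hk.2
    exact_mod_cast this
  refine ⟨M, k + d, fun τ hτ => ?_⟩
  have hmem : cyl 2 N k τ ∈ Icc u v := by
    rw [cyl_two]
    refine ⟨hk.1.trans (by gcongr; linarith [hτ.1]), ?_⟩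
    rw [div_le_iff₀' hpow, hc]
    linarith [hτ.2]
  rw [hf _ hmem, cyl_two, Int.cast_add, Int.cast_natCast, ← hd, ← zpow_natCast, ← zpow_natCast, hM,
    zpow_sub₀ two_ne_zero, zpow_neg]
  field_simp
  ring

end CentralCantor

namespace IsHigmanThompson

variable {f : ℝ → ℝ}

lemma mapsTo_Icc (hf : IsHigmanThompson 2 f) : MapsTo f (Icc 0 1) (Icc 0 1) := by
  obtain ⟨hf0, hf1, hmono, -⟩ := hf
  simpa only [hf0, hf1] using hmono.monotoneOn.mapsTo_Icc

lemma isDyadic_apply (hf0 : f 0 = 0) {m : ℕ} {x : ℕ → ℝ} (hx0 : x 0 = 0)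
    (hlt : ∀ i < m, x i < x (i + 1)) (hx : ∀ i ≤ m, IsDyadic (x i)) {κ : ℕ → ℤ}
    (hκ : ∀ i < m, ∀ t ∈ Icc (x i) (x (i + 1)), f t = f (x i) + 2 ^ κ i * (t - x i)) {i : ℕ}
    (hi : i ≤ m) : IsDyadic (f (x i)) := by
  induction i with
  | zero => simpa [hx0, hf0] using IsDyadic.intCast_div_two_pow 0 0
  | succ i ih =>
    rw [hκ i hi _ (right_mem_Icc.2 (hlt i hi).le)]
    exact (ih (by omega)).add (((hx _ hi).sub (hx _ (by omega))).two_zpow_mul _)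

lemma eventually_cyl_two (hf : IsHigmanThompson 2 f) :
    ∀ᶠ N : ℕ in atTop, ∀ k < 2 ^ N, ∃ (M : ℕ) (j : ℤ), ∀ τ ∈ Icc (0 : ℝ) 1,
      f (cyl 2 N k τ) = (j + τ) / 2 ^ M := by
  obtain ⟨hf0, -, -, m, x, hm, hx0, hxm, hlt, hdy, haff⟩ := hf
  have hx (i : ℕ) (hi : i ≤ m) : IsDyadic (x i) := by
    obtain ⟨a, e, h⟩ := hdy i hi
    exact h ▸ mod_cast IsDyadic.intCast_div_two_pow a e
  choose! κ hκ using haff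
  simp only [Nat.cast_ofNat] at hκ
  have hpiece : ∀ᶠ N : ℕ in atTop, ∀ i ∈ Finset.range m, ∀ k : ℕ,
      (k : ℝ) / 2 ^ N ∈ Ico (x i) (x (i + 1)) →
        ∃ (M : ℕ) (j : ℤ), ∀ τ ∈ Icc (0 : ℝ) 1, f (cyl 2 N k τ) = (j + τ) / 2 ^ M := by
    refine (Filter.eventually_all_finset _).2 fun i hi => ?_
    rw [Finset.mem_range] at hi
    refine eventually_cyl_two_of_affine (κ := κ i) (b := f (x i) - 2 ^ κ i * x i) (hx _ hi)
      ((isDyadic_apply hf0 hx0 hlt hx hκ hi.le).sub ((hx i hi.le).two_zpow_mul _)) fun t ht => ?_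
    rw [hκ i hi t ht]
    ring
  filter_upwards [hpiece] with N hN k hk
  have hlt1 : (k : ℝ) / 2 ^ N < 1 := (div_lt_one (by positivity)).2 (mod_cast hk)
  obtain ⟨i, hi, hik, hki⟩ := exists_le_and_lt_succ (x := x) (z := (k : ℝ) / 2 ^ N)
    (by rw [hx0]; positivity) hm
  refine hN i (Finset.mem_range.2 hi) k ⟨hik, ?_⟩
  obtain hi | hi : i + 1 = m ∨ i + 1 < m := by omega
  · rwa [hi, hxm]
  · exact hki hi

theorem hasTable (hf : IsHigmanThompson 2 f) : HasTable 2 (Icc 0 1) f := by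
  obtain ⟨N, hN⟩ := hf.eventually_cyl_two.exists
  refine ⟨N, fun k hk => ?_⟩
  obtain ⟨M, j, hMj⟩ := hN k hk
  have h0 : (0 : ℝ) ∈ Icc (0 : ℝ) 1 := left_mem_Icc.2 zero_le_one
  have h1 : (1 : ℝ) ∈ Icc (0 : ℝ) 1 := right_mem_Icc.2 zero_le_one
  have hk' : (k : ℝ) + 1 ≤ 2 ^ N := mod_cast hk
  have hmem {τ : ℝ} (hτ : τ ∈ Icc (0 : ℝ) 1) : cyl 2 N k τ ∈ Icc (0 : ℝ) 1 := by
    rw [cyl_two]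
    exact ⟨div_nonneg (add_nonneg k.cast_nonneg hτ.1) (by positivity),
      div_le_one_of_le₀ (by linarith [hτ.2]) (by positivity)⟩
  have hj0 : 0 ≤ ((j : ℝ) + 0) / 2 ^ M := (hf.mapsTo_Icc (hmem h0)).1.trans_eq (hMj 0 h0)
  have hj1 : ((j : ℝ) + 1) / 2 ^ M ≤ 1 := (hMj 1 h1).ge.trans (hf.mapsTo_Icc (hmem h1)).2
  rw [add_zero, le_div_iff₀ (by positivity), zero_mul] at hj0
  rw [div_le_one (by positivity)] at hj1
  lift j to ℕ using mod_cast hj0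
  exact ⟨M, j, mod_cast hj1, fun τ hτ => by rw [hMj τ hτ, cyl_two, Int.cast_natCast]⟩

end IsHigmanThompson

/-! ### Extension across gaps -/

namespace CentralCantor

section Extension

lemma eq_add_mul_sub_of_hasDerivAt {g : ℝ → ℝ} {c x y : ℝ}
    (h : ∀ t ∈ uIcc x y, HasDerivAt g c t) : g y = g x + c * (y - x) := by
  have := intervalIntegral.integral_eq_sub_of_hasDerivAt h intervalIntegrable_const
  rw [intervalIntegral.integral_const, smul_eq_mul] at this
  linarith

lemma surjective_of_hasDerivAt_const {g : ℝ → ℝ} (hg : Continuous g) {a b u v : ℝ} (hu : 0 < u)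
    (hv : 0 < v) (ha : ∀ x ≤ a, HasDerivAt g u x) (hb : ∀ x ≥ b, HasDerivAt g v x) :
    g.Surjective := by
  refine hg.surjective ?_ ?_
  · refine Tendsto.congr' (f₁ := fun x => g b + v * (x - b)) ?_ <|
      tendsto_atTop_add_const_left _ _ <|
        (tendsto_atTop_add_const_right _ _ tendsto_id).const_mul_atTop hv
    filter_upwards [eventually_ge_atTop b] with x hx
    exact (eq_add_mul_sub_of_hasDerivAt fun t ht => hb t (uIcc_of_le hx ▸ ht).1).symm
  · refine Tendsto.congr' (f₁ := fun x => g a + u * (x - a)) ?_ <|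
      tendsto_atBot_add_const_left _ _ <|
        (tendsto_atBot_add_const_right _ _ tendsto_id).const_mul_atBot hu
    filter_upwards [eventually_le_atBot a] with x hx
    exact (eq_add_mul_sub_of_hasDerivAt fun t ht => ha t (uIcc_of_ge hx ▸ ht).2).symm

lemma exists_continuousOn_pos_integral_eq {u v I : ℝ} (hu : 0 < u) (hv : 0 < v) (hI : 0 < I) :
    ∃ ρ : ℝ → ℝ, Continuous ρ ∧ (∀ x ∈ Icc (0 : ℝ) 1, 0 < ρ x) ∧ ρ 0 = u ∧ ρ 1 = v ∧
      ∫ x in (0 : ℝ)..1, ρ x = I := by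
  -- For large `n` the terms `u * (1 - x) ^ n` and `v * x ^ n` of the density have total integral
  -- less than `I`; the term `s * (x - x ^ 2)` supplies the rest.
  obtain ⟨n, hn⟩ := exists_nat_gt ((u + v) / I)
  have hn0 : (0 : ℝ) < n := (by positivity : 0 < (u + v) / I).trans hn
  have hn' : n ≠ 0 := mod_cast hn0.ne'
  set s := 6 * (I - (u + v) / (n + 1)) with hs_def
  have hs : 0 < s := by
    have : (u + v) / (n + 1) < I := by
      rw [div_lt_iff₀ hI] at hn
      rw [div_lt_iff₀ (by positivity)]
      linarith
    linarith
  refine ⟨fun x => u * (1 - x) ^ n + v * x ^ n + s * (x - x ^ 2), by fun_prop, ?_, by simp [hn'],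
    by simp [hn'], ?_⟩
  · rintro x ⟨hx0, hx1⟩
    have hmid : 0 ≤ s * (x - x ^ 2) := mul_nonneg hs.le (by nlinarith)
    obtain rfl | hx0 := hx0.eq_or_lt
    · simpa [hn'] using hu
    · have : 0 ≤ u * (1 - x) ^ n := mul_nonneg hu.le (pow_nonneg (sub_nonneg.2 hx1) n)
      have : 0 < v * x ^ n := by positivity
      linarith
  · have hrefl : ∫ x in (0 : ℝ)..1, (1 - x) ^ n = 1 / (n + 1) := by
      simp [intervalIntegral.integral_comp_sub_left (fun x : ℝ => x ^ n)]
    have hint {φ : ℝ → ℝ} (hφ : Continuous φ) : IntervalIntegrable φ MeasureTheory.volume 0 1 :=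
      hφ.intervalIntegrable 0 1
    rw [intervalIntegral.integral_add (hint (by fun_prop)) (hint (by fun_prop)),
      intervalIntegral.integral_add (hint (by fun_prop)) (hint (by fun_prop)),
      intervalIntegral.integral_const_mul, intervalIntegral.integral_const_mul,
      intervalIntegral.integral_const_mul,
      intervalIntegral.integral_sub (hint (by fun_prop)) (hint (by fun_prop)), hrefl,
      integral_pow, integral_pow, integral_id]
    simp only [hs_def]
    norm_num
    field_simp
    ring

lemma exists_continuous_pos_integral_eq {a b u v I : ℝ} (hab : a < b) (hu : 0 < u) (hv : 0 < v)
    (hI : 0 < I) :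
    ∃ ρ : ℝ → ℝ, Continuous ρ ∧ (∀ x, 0 < ρ x) ∧ (∀ x ≤ a, ρ x = u) ∧ (∀ x ≥ b, ρ x = v) ∧
      ∫ x in a..b, ρ x = I := by
  have hba : 0 < b - a := sub_pos.2 hab
  obtain ⟨ρ, hρ, hpos, hρ0, hρ1, hint⟩ := exists_continuousOn_pos_integral_eq hu hv
    (div_pos hI hba)
  refine ⟨fun x => IccExtend zero_le_one (fun t : Icc (0 : ℝ) 1 => ρ t) ((x - a) / (b - a)),
    by fun_prop, fun x => hpos _ (projIcc 0 1 zero_le_one _).2, fun x hx => ?_, fun x hx => ?_, ?_⟩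
  · beta_reduce
    rw [IccExtend_of_le_left _ _ (div_nonpos_of_nonpos_of_nonneg (sub_nonpos.2 hx) hba.le), hρ0]
  · beta_reduce
    rw [IccExtend_of_right_le _ _ ((one_le_div hba).2 (sub_le_sub_right hx a)), hρ1]
  · have hext : ∀ t ∈ Icc (0 : ℝ) 1,
        IccExtend zero_le_one (fun t : Icc (0 : ℝ) 1 => ρ t) t = ρ t := fun t ht =>
      IccExtend_of_mem zero_le_one (fun t : Icc (0 : ℝ) 1 => ρ t) ht
    simp only [sub_div]
    rw [intervalIntegral.integral_comp_div_sub _ hba.ne', sub_self, ← sub_div, div_self hba.ne',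
      intervalIntegral.integral_congr (g := ρ) (by rwa [uIcc_of_le zero_le_one]), hint, smul_eq_mul,
      mul_div_cancel₀ _ hba.ne']

lemma exists_continuous_pos_eqOn_Iic_eqOn_Ici {ρ φ : ℝ → ℝ} (hρ : Continuous ρ)
    (hφ : Continuous φ) (hρpos : ∀ x, 0 < ρ x) (hφpos : ∀ x, 0 < φ x) {a b s : ℝ} (hab : a ≤ b)
    (hρs : ∀ x ≥ a, ρ x = s) (hφs : ∀ x ≤ b, φ x = s) :
    ∃ σ : ℝ → ℝ, Continuous σ ∧ (∀ x, 0 < σ x) ∧ EqOn σ ρ (Iic b) ∧ EqOn σ φ (Ici a) := by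
  have hσρ : EqOn (fun x => ρ x + φ x - s) ρ (Iic b) := fun x hx => by simp [hφs x hx]
  have hσφ : EqOn (fun x => ρ x + φ x - s) φ (Ici a) := fun x hx => by simp [hρs x hx]
  refine ⟨fun x => ρ x + φ x - s, by fun_prop, fun x => ?_, hσρ, hσφ⟩
  obtain hx | hx := le_total x b
  · exact (hρpos x).trans_eq (hσρ hx).symm
  · exact (hφpos x).trans_eq (hσφ (hab.trans hx)).symm

variable {a b : ℕ → ℝ}

lemma exists_continuous_pos_eqOn_integral_eq (hab : ∀ k, a k < b k) (hba : ∀ k, b k < a (k + 1))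
    {s I : ℕ → ℝ} (hs : ∀ k, 0 < s k) {n : ℕ} (hI : ∀ k < n, 0 < I k) :
    ∃ ρ : ℝ → ℝ, Continuous ρ ∧ (∀ x, 0 < ρ x) ∧
      (∀ k ≤ n, ∀ x ∈ Icc (a k) (b k), ρ x = s k) ∧ (∀ k < n, ∫ x in b k..a (k + 1), ρ x = I k) ∧
      (∀ x ≤ a 0, ρ x = s 0) ∧ ∀ x ≥ a n, ρ x = s n := by
  have ha : Monotone a := monotone_nat_of_le_succ fun k => ((hab k).trans (hba k)).le
  have hb : Monotone b := monotone_nat_of_le_succ fun k => ((hba k).trans (hab (k + 1))).le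
  induction n with
  | zero =>
    refine ⟨fun _ => s 0, continuous_const, fun _ => hs 0, fun k hk x _ => ?_,
      fun k hk => absurd hk k.not_lt_zero, fun _ _ => rfl, fun _ _ => rfl⟩
    rw [Nat.le_zero.1 hk]
  | succ n ih =>
    obtain ⟨ρ, hρ, hρpos, hρab, hρint, hρ0, hρn⟩ := ih fun k hk => hI k (by omega)
    obtain ⟨φ, hφ, hφpos, hφb, hφa, hφint⟩ :=
      exists_continuous_pos_integral_eq (hba n) (hs n) (hs (n + 1)) (hI n n.lt_succ_self)
    obtain ⟨σ, hσ, hσpos, hσρ, hσφ⟩ :=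
      exists_continuous_pos_eqOn_Iic_eqOn_Ici hρ hφ hρpos hφpos (hab n).le hρn hφb
    refine ⟨σ, hσ, hσpos, fun k hk x hx => ?_, fun k hk => ?_, fun x hx => ?_, fun x hx => ?_⟩
    · obtain hk | rfl := Nat.le_succ_iff.1 hk
      · rw [hσρ (hx.2.trans (hb hk)), hρab k hk x hx]
      · rw [hσφ ((ha n.le_succ).trans hx.1), hφa x hx.1]
    · obtain hk | rfl := (Nat.le_of_lt_succ hk).lt_or_eq
      · rw [← hρint k hk]
        refine intervalIntegral.integral_congr fun x hx => hσρ ?_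
        rw [uIcc_of_le (hba k).le] at hx
        exact hx.2.trans ((ha hk).trans (hab n).le)
      · rw [← hφint]
        refine intervalIntegral.integral_congr fun x hx => hσφ ?_
        rw [uIcc_of_le (hba k).le] at hx
        exact (hab k).le.trans hx.1
    · rw [hσρ (hx.trans ((hab 0).le.trans (hb n.zero_le))), hρ0 x hx]
    · rw [hσφ ((ha n.le_succ).trans hx), hφa x hx]

lemma exists_contDiff_deriv_pos_surjective (hab : ∀ k, a k < b k) (hba : ∀ k, b k < a (k + 1))
    {a' b' : ℕ → ℝ} (hab' : ∀ k, a' k < b' k) {n : ℕ} (hba' : ∀ k < n, b' k < a' (k + 1)) :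
    ∃ g : ℝ → ℝ, ContDiff ℝ 1 g ∧ (∀ x, 0 < deriv g x) ∧ g.Surjective ∧
      ∀ k ≤ n, ∀ x ∈ Icc (a k) (b k), g x = a' k + (b' k - a' k) / (b k - a k) * (x - a k) := by
  set s : ℕ → ℝ := fun k => (b' k - a' k) / (b k - a k) with hs_def
  have hs (k : ℕ) : 0 < s k := div_pos (sub_pos.2 (hab' k)) (sub_pos.2 (hab k))
  obtain ⟨ρ, hρ, hpos, hρab, hρint, hρ0, hρn⟩ := exists_continuous_pos_eqOn_integral_eq hab hba hs
    (I := fun k => a' (k + 1) - b' k) fun k hk => sub_pos.2 (hba' k hk)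
  set g : ℝ → ℝ := fun x => a' 0 + ∫ t in a 0..x, ρ t with hg_def
  have hderiv (x : ℝ) : HasDerivAt g (ρ x) x :=
    (hρ.integral_hasStrictDerivAt (a 0) x).hasDerivAt.const_add (a' 0)
  have hg_deriv : deriv g = ρ := funext fun x => (hderiv x).deriv
  have hint (x y : ℝ) : g y = g x + ∫ t in x..y, ρ t := by
    rw [hg_def, add_assoc, intervalIntegral.integral_add_adjacent_intervals] <;>
      exact hρ.intervalIntegrable _ _
  have hab_eq {k : ℕ} (hk : k ≤ n) {x : ℝ} (hx : x ∈ Icc (a k) (b k)) :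
      g x = g (a k) + s k * (x - a k) := eq_add_mul_sub_of_hasDerivAt fun t ht => by
    rw [uIcc_of_le hx.1] at ht
    exact hρab k hk t ⟨ht.1, ht.2.trans hx.2⟩ ▸ hderiv t
  have ha {k : ℕ} (hk : k ≤ n) : g (a k) = a' k := by
    induction k with
    | zero => simp [hg_def]
    | succ k ih =>
      rw [hint (b k), hρint k hk, hab_eq (by omega) (right_mem_Icc.2 (hab k).le), ih (by omega),
        hs_def, div_mul_cancel₀ _ (sub_pos.2 (hab k)).ne']
      ring
  refine ⟨g, contDiff_one_iff_deriv.2 ⟨fun x => (hderiv x).differentiableAt, hg_deriv ▸ hρ⟩,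
    hg_deriv ▸ hpos, ?_, fun k hk x hx => by rw [hab_eq hk hx, ha hk]⟩
  have hg : Continuous g := continuous_iff_continuousAt.2 fun x => (hderiv x).continuousAt
  exact surjective_of_hasDerivAt_const hg (hs 0) (hs n) (fun x hx => hρ0 x hx ▸ hderiv x)
    fun x hx => hρn x hx ▸ hderiv x

lemma exists_isC1DiffeoPair {g : ℝ → ℝ} (hg : ContDiff ℝ 1 g) (hpos : ∀ x, 0 < deriv g x)
    (hsurj : g.Surjective) : ∃ k, IsC1DiffeoPair g k := by
  have hmono : StrictMono g := strictMono_of_deriv_pos hpos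
  let e := (hmono.orderIsoOfSurjective g hsurj).toHomeomorph
  exact ⟨e.symm, hg, e.contDiff_symm_deriv (fun x => (hpos x).ne')
    (fun x => (hg.differentiable one_ne_zero x).hasDerivAt) hg, e.symm_apply_apply,
    e.apply_symm_apply⟩

end Extension

end CentralCantor

lemma IsC1DiffeoPair.deriv_pos {g k : ℝ → ℝ} (h : IsC1DiffeoPair g k) (hg : StrictMono g) (x : ℝ) :
    0 < deriv g x := by
  obtain ⟨hgd, hkd, hkg, -⟩ := h
  refine hg.monotone.deriv_nonneg.lt_of_ne' fun h0 => ?_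
  have hcomp := (hkd.differentiable one_ne_zero (g x)).hasDerivAt.comp x
    (hgd.differentiable one_ne_zero x).hasDerivAt
  rw [hkg.comp_eq_id, h0, mul_zero] at hcomp
  exact zero_ne_one (hcomp.unique (hasDerivAt_id x))

namespace CentralCantor

/-- The dyadic intervals `[j k / 2 ^ m k, (j k + 1) / 2 ^ m k]` with `k < n` subdivide `[0, 1]`,
listed from left to right. Adjacency is expressed in `ℕ`, with cleared denominators. -/
structure IsDyadicSubdivision (n : ℕ) (m j : ℕ → ℕ) : Prop where
  lt_two_pow : ∀ k < n, j k < 2 ^ m k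
  first : j 0 = 0
  adjacent : ∀ k, k + 1 < n → (j k + 1) * 2 ^ m (k + 1) = j (k + 1) * 2 ^ m k
  last : j (n - 1) + 1 = 2 ^ m (n - 1)

lemma cyl_eq_affine_cyl {l : ℝ} (hl : l ≠ 0) (n k m j : ℕ) (y : ℝ) :
    cyl l m j y = cyl l m j 0 + (cyl l m j 1 - cyl l m j 0) / (cyl l n k 1 - cyl l n k 0) *
      (cyl l n k y - cyl l n k 0) := by
  rw [← sub_eq_iff_eq_add', cyl_sub_cyl, cyl_sub_cyl, cyl_sub_cyl, cyl_sub_cyl]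
  field_simp

end CentralCantor

lemma IsHigmanThompson.exists_isDyadicSubdivision {f : ℝ → ℝ} (hf : IsHigmanThompson 2 f) :
    ∃ (n : ℕ) (m j : ℕ → ℕ), IsDyadicSubdivision (2 ^ n) m j ∧
      ∀ k < 2 ^ n, ∀ t ∈ Icc (0 : ℝ) 1, f (cyl 2 n k t) = cyl 2 (m k) (j k) t := by
  obtain ⟨n, hn⟩ := hf.hasTable
  choose! m j hj hmj using hn
  obtain ⟨hf0, hf1, -⟩ := hf
  have h0 : (0 : ℝ) ∈ Icc (0 : ℝ) 1 := left_mem_Icc.2 zero_le_one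
  have h1 : (1 : ℝ) ∈ Icc (0 : ℝ) 1 := right_mem_Icc.2 zero_le_one
  refine ⟨n, m, j, ⟨hj, ?_, fun k hk => ?_, ?_⟩, hmj⟩
  · have h := hmj 0 (by positivity) 0 h0
    rw [cyl_zero_left, hf0, cyl_two, add_zero, eq_comm, div_eq_zero_iff] at h
    exact_mod_cast h.resolve_right (by positivity)
  · have hnext : cyl 2 n k 1 = cyl 2 n (k + 1) 0 := by simp [cyl_two]
    have h := hmj k (by omega) 1 h1
    rw [hnext, hmj (k + 1) hk 0 h0, cyl_two, cyl_two, add_zero,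
      div_eq_div_iff (by positivity) (by positivity)] at h
    exact_mod_cast h.symm
  · have h := hmj (2 ^ n - 1) (Nat.sub_lt (by positivity) one_pos) 1 h1
    rw [cyl_last two_ne_zero, hf1, cyl_two, eq_comm, div_eq_one_iff_eq (by positivity)] at h
    exact_mod_cast h

namespace IsCentralCantor

variable {l : ℝ} {C : Set ℝ} {n : ℕ} {m j : ℕ → ℕ}

lemma exists_cyl_of_isDyadicSubdivision (hC : IsCentralCantor l C) (hl : 2 < l) (hn : 0 < n)
    (h : IsDyadicSubdivision n m j) {z : ℝ} (hz : z ∈ C) :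
    ∃ k < n, ∃ y ∈ C, cyl l (m k) (j k) y = z := by
  have hz01 := hC.subset_Icc (by linarith) hz
  obtain ⟨k, hk, hkz, hzk⟩ := exists_le_and_lt_succ (x := fun k => cyl l (m k) (j k) 0) (z := z)
    (by rw [h.first, cyl_zero_left]; exact hz01.1) hn
  refine ⟨k, hk, hC.exists_cyl_eq_of_mem_Icc hl hz ⟨hkz, ?_⟩⟩
  by_cases hk' : k + 1 < n
  · have hgap := hC.isGap_cyl_of_adjacent hl (h.lt_two_pow _ hk') (h.adjacent k hk')
    by_contra! hlt
    exact hgap.notMem_Ioo z hz ⟨hlt, hzk hk'⟩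
  · obtain rfl : k = n - 1 := by omega
    rw [Nat.eq_sub_of_add_eq h.last, cyl_last (by positivity)]
    exact hz01.2

lemma image_eq_of_isDyadicSubdivision (hC : IsCentralCantor l C) (hl : 2 < l)
    (h : IsDyadicSubdivision (2 ^ n) m j) {g : ℝ → ℝ}
    (hg : ∀ k < 2 ^ n, ∀ y ∈ C, g (cyl l n k y) = cyl l (m k) (j k) y) : g '' C = C := by
  have hl0 : l ≠ 0 := by positivity
  refine Subset.antisymm ?_ fun z hz => ?_
  · rintro _ ⟨x, hx, rfl⟩
    obtain ⟨k, hk, y, hy, rfl⟩ := hC.exists_cyl hl0 n hx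
    rw [hg k hk y hy]
    exact hC.cyl_mem hl0 (h.lt_two_pow k hk) hy
  · obtain ⟨k, hk, y, hy, rfl⟩ := hC.exists_cyl_of_isDyadicSubdivision hl (by positivity) h hz
    exact ⟨cyl l n k y, hC.cyl_mem hl0 hk hy, hg k hk y hy⟩

theorem exists_isC1DiffeoPair_isCantorLift (hC : IsCentralCantor l C) (hl : 2 < l) {f : ℝ → ℝ}
    (hf : IsHigmanThompson 2 f) :
    ∃ g k : ℝ → ℝ, IsC1DiffeoPair g k ∧ StrictMono g ∧ IsCantorLift l C f g := by
  have hl0 : 0 < l := by positivity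
  have hsub := hC.subset_Icc (by linarith : 1 < l)
  obtain ⟨n, m, j, hmj, htab⟩ := hf.exists_isDyadicSubdivision
  obtain ⟨g, hg, hpos, hsurj, haff⟩ := exists_contDiff_deriv_pos_surjective
    (a := fun k => cyl l n k 0) (b := fun k => cyl l n k 1)
    (a' := fun k => cyl l (m k) (j k) 0) (b' := fun k => cyl l (m k) (j k) 1) (n := 2 ^ n - 1)
    (fun k => cyl_strictMono hl0 n k one_pos)
    (fun k => cyl_lt_cyl hl n k.lt_succ_self le_rfl le_rfl)
    (fun k => cyl_strictMono hl0 (m k) (j k) one_pos)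
    fun k hk => (hC.isGap_cyl_of_adjacent hl (hmj.lt_two_pow _ (Nat.add_lt_of_lt_sub hk))
      (hmj.adjacent k (Nat.add_lt_of_lt_sub hk))).lt
  have hgcyl (k : ℕ) (hk : k < 2 ^ n) (y : ℝ) (hy : y ∈ C) :
      g (cyl l n k y) = cyl l (m k) (j k) y := by
    have hcyl := (cyl_strictMono hl0 n k).monotone
    rw [haff k (Nat.le_sub_one_of_lt hk) _ ⟨hcyl (hsub hy).1, hcyl (hsub hy).2⟩,
      ← cyl_eq_affine_cyl hl0.ne']
  obtain ⟨k, hgk⟩ := exists_isC1DiffeoPair hg hpos hsurj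
  have hmono : StrictMono g := strictMono_of_deriv_pos hpos
  refine ⟨g, k, hgk, hmono, hmono.strictMonoOn C, hC.image_eq_of_isDyadicSubdivision hl hmj hgcyl,
    fun x hx => ?_⟩
  obtain ⟨k, hk, y, hy, rfl⟩ := hC.exists_cyl hl0.ne' n hx
  rw [hgcyl k hk y hy, cantorFn_cyl hl (hmj.lt_two_pow k hk) (hsub hy),
    cantorFn_cyl hl hk (hsub hy), htab k hk _ (cantorFn_mem_Icc l y)]

theorem exists_isHigmanThompson_isCantorLift_of_isC1DiffeoPair (hC : IsCentralCantor l C)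
    (hl : 2 < l) {g k : ℝ → ℝ} (hgk : IsC1DiffeoPair g k) (hg : StrictMono g) (hgC : g '' C = C) :
    ∃ f, IsHigmanThompson 2 f ∧ IsCantorLift l C f g :=
  hC.exists_isHigmanThompson_isCantorLift hl (hg.strictMonoOn C) hgC
    (hC.hasTable_of_contDiff hl hgk.1 (hgk.deriv_pos hg) hgC)

end IsCentralCantor

namespace CentralCantor

/-- The isomorphism of Thompson's group `F` onto the diffeomorphism group of `C_l`: a map that lifts
`f` through the Cantor function. It is determined on `C` by `IsCantorLift.cantorLift_eqOn`, and is
arbitrary if `f` has no lift. -/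
noncomputable def cantorLift (l : ℝ) (C : Set ℝ) (f : ℝ → ℝ) : ℝ → ℝ :=
  Classical.epsilon (IsCantorLift l C f)

namespace IsCantorLift

variable {l : ℝ} {C : Set ℝ} {f g : ℝ → ℝ}

lemma isCantorLift_cantorLift (h : IsCantorLift l C f g) : IsCantorLift l C f (cantorLift l C f) :=
  Classical.epsilon_spec ⟨g, h⟩

lemma cantorLift_eqOn (h : IsCantorLift l C f g) (hC : IsCentralCantor l C) (hl : 2 < l)
    (hf : InjOn f (Icc 0 1)) : EqOn (cantorLift l C f) g C :=
  h.isCantorLift_cantorLift.eqOn_of_injOn hC hl hf h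

end IsCantorLift

end CentralCantor

/-- For the central Cantor set `C_λ` (λ > 2), the group of transformations of `C_λ`
induced by orientation-preserving `C¹` diffeomorphisms of ℝ preserving `C_λ` is
isomorphic to Thompson's group `F`: there is a realization `Θ` of `F = F₂` by
restrictions of diffeomorphisms which is multiplicative, injective and surjective. -/
theorem diffeo_group_centralCantor_iso_F (l : ℝ) (hl : 2 < l) (C : Set ℝ)
    (hC : IsCentralCantor l C) :
    ∃ Θ : (ℝ → ℝ) → (ℝ → ℝ),
      (∀ f, IsHigmanThompson 2 f → ∃ g h : ℝ → ℝ, IsC1DiffeoPair g h ∧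
        StrictMono g ∧ g '' C = C ∧ Set.EqOn (Θ f) g C) ∧
      (∀ f g, IsHigmanThompson 2 f → IsHigmanThompson 2 g →
        Set.EqOn (Θ (f ∘ g)) (Θ f ∘ Θ g) C) ∧
      (∀ f g, IsHigmanThompson 2 f → IsHigmanThompson 2 g →
        Set.EqOn (Θ f) (Θ g) C → Set.EqOn f g (Set.Icc 0 1)) ∧
      (∀ g h : ℝ → ℝ, IsC1DiffeoPair g h → StrictMono g → g '' C = C →
        ∃ f, IsHigmanThompson 2 f ∧ Set.EqOn (Θ f) g C) := by
  have hlift {f : ℝ → ℝ} (hf : IsHigmanThompson 2 f) : IsCantorLift l C f (cantorLift l C f) :=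
    let ⟨_, _, _, _, h⟩ := hC.exists_isC1DiffeoPair_isCantorLift hl hf
    h.isCantorLift_cantorLift
  have hinj {f : ℝ → ℝ} (hf : IsHigmanThompson 2 f) : InjOn f (Icc 0 1) := hf.2.2.1.injOn
  refine ⟨cantorLift l C, fun f hf => ?_, fun f g hf hg => ?_, fun f g hf hg hfg => ?_,
    fun g k hgk hg hgC => ?_⟩
  · obtain ⟨g, k, hgk, hg, hfg⟩ := hC.exists_isC1DiffeoPair_isCantorLift hl hf
    exact ⟨g, k, hgk, hg, hfg.image_eq, hfg.cantorLift_eqOn hC hl (hinj hf)⟩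
  · have hfg := (hlift hf).comp (hlift hg)
    exact hfg.cantorLift_eqOn hC hl ((hinj hf).comp (hinj hg) hg.mapsTo_Icc)
  · exact (hlift hf).eqOn_Icc (hlift hg) (hC.cantorFn_surjOn hl) hfg
  · obtain ⟨f, hf, hfg⟩ := hC.exists_isHigmanThompson_isCantorLift_of_isC1DiffeoPair hl hgk hg hgC
    exact ⟨f, hf, hfg.cantorLift_eqOn hC hl (hinj hf)⟩
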